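/- arXiv:math/0612508 — 3 statements merged into one kernel-verified Lean document; each statement's English description precedes it below -/
import Mathlib

section
/- Let σ ∈ S_n have cycle type 1^{λ_1} 2^{λ_2} ⋯ n^{λ_n} and let Z_σ be its centralizer in S_n. Then the abelianization Z_σ/Z_σ' is isomorphic to (∏_{i : λ_i = 1} C_i) × (∏_{i : λ_i ≥ 2} (C_i × C_2)), where C_k denotes the cyclic group of order k. -/
/-
The points of a cycle of length `i` of `σ` can be labelled by `C_i` so that `σ` becomes translation
by the generator. This identifies `σ` with the translation of the second coordinate on the disjoint
union of the sets `F_i × C_i`, where `F_i` is the set of cycles of length `i`. A permutation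
commuting with `σ` preserves cycle lengths, hence each `F_i × C_i`, and acts there as an element of
the wreath product `C_i ≀ Sym(F_i)`. So `Z_σ` is the direct product of these wreath products. In
the abelianization of `C ≀ Sym(F)` the base coordinates get identified with each other, and
`Sym(F)` contributes only its sign.
-/

section Development

open Equiv MulAction

section Abelianization

/-- The isomorphism from the abelianization of `G` to a commutative quotient `φ : G →* A` whose
kernel is no larger than the commutator subgroup. -/
noncomputable def abelianizationEquivOfSurjective {G A : Type*} [Group G] [CommGroup A]
    (φ : G →* A) (hφ : Function.Surjective φ) (hker : φ.ker ≤ commutator G) :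
    Abelianization G ≃* A :=
  (QuotientGroup.quotientMulEquivOfEq
    ((Abelianization.commutator_subset_ker φ).antisymm hker)).trans
    (QuotientGroup.quotientKerEquivOfSurjective φ hφ)

theorem commutator_pi {ι : Type*} [Finite ι] (G : ι → Type*) [∀ i, Group (G i)] :
    commutator (∀ i, G i) = Subgroup.pi Set.univ fun i => commutator (G i) := by
  simp only [commutator_def]
  rw [← Subgroup.commutator_pi_pi_of_finite, Subgroup.pi_top]

/-- Abelianization commutes with finite direct products. -/
noncomputable def abelianizationPiEquiv {ι : Type*} [Finite ι] (G : ι → Type*)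
    [∀ i, Group (G i)] : Abelianization (∀ i, G i) ≃* ∀ i, Abelianization (G i) :=
  abelianizationEquivOfSurjective (MonoidHom.piMap fun _ => Abelianization.of)
    (Function.Surjective.piMap fun _ => QuotientGroup.mk_surjective) fun g hg => by
      rw [commutator_pi, Subgroup.mem_pi]
      intro i _
      rw [← Abelianization.ker_of]
      exact congrFun hg i

theorem commutator_perm_eq_alternatingGroup (α : Type*) [Fintype α] [DecidableEq α] :
    commutator (Perm α) = alternatingGroup α := by
  refine alternatingGroup.commutator_perm_le.antisymm ?_
  rw [← Perm.closure_three_cycles_eq_alternating, Subgroup.closure_le]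
  intro c (hc : c.IsThreeCycle)
  rw [SetLike.mem_coe, ← Abelianization.ker_of, MonoidHom.mem_ker]
  have h_inv : Abelianization.of c = Abelianization.of c⁻¹ :=
    isConj_iff_eq.mp (Abelianization.of.map_isConj
      (Perm.isConj_iff_cycleType_eq.mpr (Perm.cycleType_inv c).symm))
  have h_sq : Abelianization.of c ^ 2 = 1 := by
    rw [map_inv, eq_inv_iff_mul_eq_one] at h_inv
    rwa [sq]
  have h_cube : Abelianization.of c ^ 3 = 1 := by
    rw [← map_pow, ← hc.orderOf, pow_orderOf_eq_one, map_one]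
  rwa [pow_succ, h_sq, one_mul] at h_cube

theorem card_range_sign (F : Type*) [Fintype F] [DecidableEq F] :
    Nat.card (Perm.sign : Perm F →* ℤˣ).range = if 2 ≤ Nat.card F then 2 else 1 := by
  rcases subsingleton_or_nontrivial F with h | _
  · have h_lt : ¬ 2 ≤ Nat.card F := by
      have := Finite.card_le_one_iff_subsingleton.mpr h
      lia
    have h_bot : (Perm.sign : Perm F →* ℤˣ).range = ⊥ := by
      rw [eq_bot_iff]
      rintro _ ⟨τ, rfl⟩
      rw [Subsingleton.elim τ 1, map_one]
      exact one_mem _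
    rw [h_bot, Subgroup.card_bot, if_neg h_lt]
  · rw [MonoidHom.range_eq_top.mpr (Perm.sign_surjective F), Subgroup.card_top,
      Nat.card_eq_fintype_card, Fintype.card_units_int,
      if_pos (show 2 ≤ Nat.card F from Finite.one_lt_card)]

end Abelianization

section Wreath

/-- The wreath product `C ≀ Sym(F)`, in which `Sym(F)` permutes the coordinates of `F → C`. -/
abbrev Wreath (F C : Type*) [Group C] : Type _ :=
  (F → C) ⋊[(mulAutArrow : Perm F →* MulAut (F → C))] Perm F

namespace Wreath

variable {F C A : Type*}

section Group

variable [Group C]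

/-- The imprimitive action of the wreath product on `F × C`, the base group acting by left
multiplication. -/
def toPerm (F C : Type*) [Group C] : Wreath F C →* Perm (F × C) where
  toFun w :=
    { toFun := fun x => (w.right x.1, w.left (w.right x.1) * x.2)
      invFun := fun y => (w.right.symm y.1, (w.left y.1)⁻¹ * y.2)
      left_inv := fun x => by simp
      right_inv := fun x => by simp }
  map_one' := by ext <;> simp
  map_mul' w v := by
    ext x
    · rfl
    · have h : (w * v).left (w.right (v.right x.1)) =
          w.left (w.right (v.right x.1)) * v.left (v.right x.1) :=
        congrArg (fun j => w.left (w.right (v.right x.1)) * v.left j) (w.right.symm_apply_apply _)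
      exact (congrArg (· * x.2) h).trans (mul_assoc _ _ _)

theorem toPerm_apply (w : Wreath F C) (j : F) (c : C) :
    toPerm F C w (j, c) = (w.right j, w.left (w.right j) * c) := rfl

theorem toPerm_injective : Function.Injective (toPerm F C) := by
  intro w v h
  have h_apply (j : F) : (w.right j, w.left (w.right j)) = (v.right j, v.left (v.right j)) := by
    simpa only [toPerm_apply, mul_one] using DFunLike.congr_fun h (j, 1)
  have h_right : w.right = v.right := Equiv.ext fun j => congrArg Prod.fst (h_apply j)
  refine SemidirectProduct.ext (funext fun j => ?_) h_right
  have h_left := congrArg Prod.snd (h_apply (w.right.symm j))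
  rwa [← h_right, apply_symm_apply] at h_left

/-- The permutation of `F × C` multiplying the second coordinate by `g` on the right. -/
def shift (F : Type*) (g : C) : Perm (F × C) :=
  (Equiv.refl F).prodCongr (Equiv.mulRight g)

theorem shift_zpow (F : Type*) (g : C) (n : ℤ) : shift F g ^ n = shift F (g ^ n) := by
  let extend : Perm C →* Perm (F × C) :=
    { toFun := (Equiv.refl F).prodCongr, map_one' := rfl, map_mul' := fun _ _ => rfl }
  exact (map_zpow extend (Equiv.mulRight g) n).symm.trans (congrArg extend (zpow_mulRight g n))

theorem minimalPeriod_shift (g : C) (x : F × C) :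
    Function.minimalPeriod (shift F g) x = orderOf g := by
  refine Function.minimalPeriod_eq_minimalPeriod_iff.mpr fun n => ?_
  rw [isPeriodicPt_mul_iff_pow_eq_one, Function.IsPeriodicPt, Function.IsFixedPt,
    Perm.iterate_eq_pow, ← zpow_natCast, shift_zpow, zpow_natCast]
  exact Prod.ext_iff.trans ((and_iff_right rfl).trans mul_eq_left)

theorem exists_toPerm_eq {z : Perm (F × C)} (hz : ∀ c, Commute z (shift F c)) :
    ∃ w, toPerm F C w = z := by
  have h_apply {y : Perm (F × C)} (hy : ∀ c, Commute y (shift F c)) (j : F) (c : C) :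
      y (j, c) = ((y (j, 1)).1, (y (j, 1)).2 * c) := by
    simpa [shift, Prod.map] using DFunLike.congr_fun (hy c).eq (j, 1)
  have h_inv (c : C) : Commute z⁻¹ (shift F c) := (hz c).inv_left
  let τ : Perm F :=
    { toFun := fun j => (z (j, 1)).1
      invFun := fun j => (z⁻¹ (j, 1)).1
      left_inv := fun j => by
        simpa using congrArg Prod.fst (h_apply h_inv (z (j, 1)).1 (z (j, 1)).2).symm
      right_inv := fun j => by
        simpa using congrArg Prod.fst (h_apply hz (z⁻¹ (j, 1)).1 (z⁻¹ (j, 1)).2).symm }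
  refine ⟨⟨fun j => (z (τ.symm j, 1)).2, τ⟩, Equiv.ext fun ⟨j, c⟩ => ?_⟩
  change (τ j, (z (τ.symm (τ j), 1)).2 * c) = z (j, c)
  rw [symm_apply_apply, h_apply hz j c]
  rfl

theorem range_toPerm {g : C} (hg : ∀ c, c ∈ Subgroup.zpowers g) :
    (toPerm F C).range = Subgroup.centralizer {shift F g} := by
  ext z
  rw [Subgroup.mem_centralizer_singleton_iff, MonoidHom.mem_range]
  constructor
  · rintro ⟨w, rfl⟩
    exact Equiv.ext fun _ => Prod.ext rfl (mul_assoc _ _ _).symm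
  · refine fun hz => exists_toPerm_eq fun c => ?_
    obtain ⟨n, rfl⟩ := hg c
    simpa only [shift_zpow] using Commute.zpow_right hz n

/-- For cyclic `C`, the wreath product is the centralizer of a permutation of `F × C` all of whose
cycles are copies of `C`. -/
noncomputable def equivCentralizerShift (F : Type*) {g : C} (hg : ∀ c, c ∈ Subgroup.zpowers g) :
    Wreath F C ≃* Subgroup.centralizer {shift F g} :=
  (MonoidHom.ofInjective toPerm_injective).trans (MulEquiv.subgroupCongr (range_toPerm hg))

end Group

section CommGroup

variable [CommGroup C] [CommGroup A]

theorem map_inl_mulSingle [DecidableEq F] (f : Wreath F C →* A) (i j : F) (c : C) :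
    f (.inl (Pi.mulSingle i c)) = f (.inl (Pi.mulSingle j c)) := by
  have h_swap :
      (mulAutArrow (swap i j) : MulAut (F → C)) (Pi.mulSingle j c) = Pi.mulSingle i c := by
    ext x
    change (Pi.mulSingle j c : F → C) (swap i j x) = _
    simp only [Pi.mulSingle_apply, swap_apply_eq_iff, swap_apply_right]
  rw [← h_swap, SemidirectProduct.inl_aut, map_mul, map_mul, mul_right_comm, ← map_mul, ← map_mul,
    ← map_mul, mul_inv_cancel, map_one, one_mul]

variable [Fintype F]

/-- The product of the base coordinates of an element of the wreath product. -/
def prodHom (F C : Type*) [CommGroup C] [Fintype F] : Wreath F C →* C where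
  toFun w := ∏ j, w.left j
  map_one' := Finset.prod_const_one
  map_mul' w v := by
    simp only [SemidirectProduct.mul_left, Pi.mul_apply, Finset.prod_mul_distrib]
    congr 1
    exact w.right.symm.prod_comp v.left

theorem map_inl [DecidableEq F] (f : Wreath F C →* A) (j : F) (v : F → C) :
    f (.inl v) = f (.inl (Pi.mulSingle j (∏ i, v i))) := by
  let g := f.comp SemidirectProduct.inl
  calc g v = ∏ i, g (Pi.mulSingle i (v i)) := by
        rw [← map_prod, Finset.univ_prod_mulSingle]
    _ = ∏ i, g (Pi.mulSingle j (v i)) :=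
        Finset.prod_congr rfl fun i _ => map_inl_mulSingle f i j (v i)
    _ = g (Pi.mulSingle j (∏ i, v i)) :=
        (map_prod (g.comp (MonoidHom.mulSingle (fun _ : F => C) j)) v Finset.univ).symm

theorem map_inl_eq_one (f : Wreath F C →* A) {v : F → C} (hv : ∏ i, v i = 1) :
    f (.inl v) = 1 := by
  classical
  rcases isEmpty_or_nonempty F with _ | ⟨⟨j⟩⟩
  · rw [Subsingleton.elim v 1, map_one, map_one]
  · rw [map_inl f j, hv, Pi.mulSingle_one, map_one, map_one]

theorem map_inr_eq_one [DecidableEq F] (f : Wreath F C →* A) {τ : Perm F} (hτ : τ.sign = 1) :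
    f (.inr τ) = 1 := by
  have h_mem : τ ∈ commutator (Perm F) := by
    rwa [commutator_perm_eq_alternatingGroup, Perm.mem_alternatingGroup]
  exact Abelianization.commutator_subset_ker (f.comp SemidirectProduct.inr) h_mem

/-- The product of the base coordinates and the sign of the permutation; restricting to the ranges
makes it surjective also when `F` has fewer than two elements. -/
def prodSign (F C : Type*) [CommGroup C] [Fintype F] [DecidableEq F] :
    Wreath F C →* (prodHom F C).range × (Perm.sign : Perm F →* ℤˣ).range :=
  (prodHom F C).rangeRestrict.prod (Perm.sign.rangeRestrict.comp SemidirectProduct.rightHom)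

theorem prodSign_surjective [DecidableEq F] : Function.Surjective (prodSign F C) := by
  rintro ⟨⟨_, w, rfl⟩, ⟨_, τ, rfl⟩⟩
  exact ⟨⟨w.left, τ⟩, rfl⟩

theorem ker_prodSign_le_commutator [DecidableEq F] :
    (prodSign F C).ker ≤ commutator (Wreath F C) := by
  intro w hw
  have h_prod : ∏ i, w.left i = 1 := congrArg (fun x => (x.1 : C)) hw
  have h_sign : w.right.sign = 1 := congrArg (fun x => (x.2 : ℤˣ)) hw
  rw [← Abelianization.ker_of, MonoidHom.mem_ker, ← SemidirectProduct.inl_left_mul_inr_right w,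
    map_mul, map_inl_eq_one _ h_prod, map_inr_eq_one _ h_sign, one_mul]

theorem card_range_prodHom :
    Nat.card (prodHom F C).range = if Nat.card F = 0 then 1 else Nat.card C := by
  classical
  rcases isEmpty_or_nonempty F with _ | hF
  · have h_bot : (prodHom F C).range = ⊥ := by
      rw [eq_bot_iff]
      rintro _ ⟨w, rfl⟩
      exact Fintype.prod_empty _
    rw [h_bot, Subgroup.card_bot, Nat.card_of_isEmpty, if_pos rfl]
  · let ⟨j⟩ := hF
    have h_top : (prodHom F C).range = ⊤ :=
      MonoidHom.range_eq_top.mpr fun c => ⟨.inl (Pi.mulSingle j c), by simp [prodHom]⟩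
    rw [h_top, Subgroup.card_top, if_neg Finite.card_pos.ne']

end CommGroup

theorem nonempty_abelianization_equiv (F C : Type*) [Finite F] [CommGroup C] [IsCyclic C] :
    Nonempty (Abelianization (Wreath F C) ≃*
      Multiplicative (ZMod (if Nat.card F = 0 then 1 else Nat.card C)) ×
      Multiplicative (ZMod (if 2 ≤ Nat.card F then 2 else 1))) := by
  classical
  have := Fintype.ofFinite F
  rw [← card_range_prodHom, ← card_range_sign]
  exact ⟨(abelianizationEquivOfSurjective _ prodSign_surjective ker_prodSign_le_commutator).trans
    ((zmodCyclicMulEquiv inferInstance).prodCongr (zmodCyclicMulEquiv inferInstance)).symm⟩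

end Wreath

end Wreath

section Centralizer

theorem minimalPeriod_map {α β : Type*} {f : α → α} {g : β → β} {e : α → β}
    (he : Function.Injective e) (h : Function.Semiconj e f g) (x : α) :
    Function.minimalPeriod g (e x) = Function.minimalPeriod f x :=
  Function.minimalPeriod_eq_minimalPeriod_iff.mpr fun n => by
    rw [Function.IsPeriodicPt, Function.IsFixedPt, ← (h.iterate_right n).eq, he.eq_iff]
    rfl

theorem minimalPeriod_apply_of_commute {α : Type*} {z σ : Perm α} (h : Commute z σ) (x : α) :
    Function.minimalPeriod σ (z x) = Function.minimalPeriod σ x :=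
  minimalPeriod_map z.injective (DFunLike.congr_fun h.eq) x

variable {ι : Type*} {β : ι → Type*}

theorem exists_sigmaCongrRight_eq {z : Perm (Σ i, β i)} (hz : ∀ x, (z x).1 = x.1) :
    ∃ w, Perm.sigmaCongrRight w = z := by
  have h_fiber (i : ι) (x : Σ i, β i) : (z x).1 = i ↔ x.1 = i := by rw [hz]
  have h_sigmaSubtype (i : ι) (x : {x : Σ i, β i // x.1 = i}) : ⟨i, sigmaSubtype i x⟩ = x.1 :=
    congrArg Subtype.val ((sigmaSubtype i).symm_apply_apply x)
  refine ⟨fun i => (sigmaSubtype i).permCongr (z.subtypePerm (h_fiber i)), Equiv.ext ?_⟩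
  rintro ⟨i, b⟩
  exact h_sigmaSubtype i ⟨z ⟨i, b⟩, hz ⟨i, b⟩⟩

theorem fst_apply_eq_of_commute_sigmaCongrRight {f : ∀ i, Perm (β i)} {p : ι → ℕ}
    (hp : Function.Injective p) (hf : ∀ i b, Function.minimalPeriod (f i) b = p i)
    {z : Perm (Σ i, β i)} (hz : Commute z (Perm.sigmaCongrRight f)) (x : Σ i, β i) :
    (z x).1 = x.1 := by
  have h_period (y : Σ i, β i) : Function.minimalPeriod (Perm.sigmaCongrRight f) y = p y.1 :=
    (minimalPeriod_map sigma_mk_injective (fun _ => rfl) y.2).trans (hf y.1 y.2)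
  rw [← hp.eq_iff, ← h_period, ← h_period]
  exact minimalPeriod_apply_of_commute hz x

theorem range_sigmaCongrRightHom_comp_piMap_centralizer {f : ∀ i, Perm (β i)} {p : ι → ℕ}
    (hp : Function.Injective p) (hf : ∀ i b, Function.minimalPeriod (f i) b = p i) :
    ((Perm.sigmaCongrRightHom β).comp
      (MonoidHom.piMap fun i => (Subgroup.centralizer {f i}).subtype)).range =
      Subgroup.centralizer {Perm.sigmaCongrRight f} := by
  ext z
  rw [Subgroup.mem_centralizer_singleton_iff, MonoidHom.mem_range]
  constructor
  · rintro ⟨w, rfl⟩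
    change Perm.sigmaCongrRight _ * Perm.sigmaCongrRight f =
      Perm.sigmaCongrRight f * Perm.sigmaCongrRight _
    rw [Perm.sigmaCongrRight_mul, Perm.sigmaCongrRight_mul]
    exact congrArg _ (funext fun i => Subgroup.mem_centralizer_singleton_iff.mp (w i).2)
  · intro hz
    obtain ⟨w, rfl⟩ :=
      exists_sigmaCongrRight_eq (fst_apply_eq_of_commute_sigmaCongrRight hp hf hz)
    rw [Perm.sigmaCongrRight_mul, Perm.sigmaCongrRight_mul] at hz
    have h_comm := Perm.sigmaCongrRightHom_injective hz
    exact ⟨fun i => ⟨w i, Subgroup.mem_centralizer_singleton_iff.mpr (congrFun h_comm i)⟩, rfl⟩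

/-- Permutations with pairwise distinct, constant cycle lengths on the summands of a disjoint union
can be centralized summand by summand. -/
noncomputable def piCentralizerEquiv {f : ∀ i, Perm (β i)} {p : ι → ℕ}
    (hp : Function.Injective p) (hf : ∀ i b, Function.minimalPeriod (f i) b = p i) :
    (∀ i, Subgroup.centralizer {f i}) ≃* Subgroup.centralizer {Perm.sigmaCongrRight f} :=
  (MonoidHom.ofInjective
    (f := (Perm.sigmaCongrRightHom β).comp
      (MonoidHom.piMap fun i => (Subgroup.centralizer {f i}).subtype))
    (Perm.sigmaCongrRightHom_injective.comp
      (Function.Injective.piMap fun _ => Subtype.val_injective))).trans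
    (MulEquiv.subgroupCongr (range_sigmaCongrRightHom_comp_piMap_centralizer hp hf))

/-- An isomorphism of groups maps the centralizer of an element onto the centralizer of its
image. -/
def centralizerCongr {G H : Type*} [Group G] [Group H] (φ : G ≃* H) {g : G} {h : H}
    (hgh : φ g = h) :
    Subgroup.centralizer {g} ≃* Subgroup.centralizer {h} :=
  (φ.subgroupMap _).trans (MulEquiv.subgroupCongr (by
    ext x
    refine Subgroup.mem_map_equiv.trans ?_
    rw [Subgroup.mem_centralizer_singleton_iff, Subgroup.mem_centralizer_singleton_iff,
      ← φ.injective.eq_iff, map_mul, map_mul, hgh, φ.apply_symm_apply]))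

end Centralizer

theorem mem_zpowers_ofAdd_one {i : ℕ} (c : Multiplicative (ZMod i)) :
    c ∈ Subgroup.zpowers (Multiplicative.ofAdd (1 : ZMod i)) := by
  obtain ⟨n, hn⟩ := ZMod.intCast_surjective c.toAdd
  exact ⟨n, by simp [← ofAdd_zsmul, hn]⟩

section PermCycle

variable {α : Type*}

/-- The cycles of `σ`, encoded as the orbits of `⟨σ⟩`: fixed points count as cycles, and infinite
cycles are allowed. -/
abbrev PermCycle (σ : Perm α) : Type _ := orbitRel.Quotient (Subgroup.zpowers σ) α

namespace PermCycle

variable {σ : Perm α}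

/-- The length of a cycle; an infinite cycle has length `0`. -/
noncomputable def length (c : PermCycle σ) : ℕ := Function.minimalPeriod σ c.out

/-- The cycle of `σ` through a point. -/
def mk (σ : Perm α) (x : α) : PermCycle σ := Quotient.mk'' x

theorem mk_eq_mk_iff {x y : α} : mk σ x = mk σ y ↔ σ.SameCycle x y := by
  rw [mk, mk, Quotient.eq'', orbitRel_apply, Perm.sameCycle_comm]
  exact Subgroup.exists_zpowers

theorem mk_out (c : PermCycle σ) : mk σ c.out = c := Quotient.out_eq' c

theorem sameCycle_out_mk (x : α) : σ.SameCycle (mk σ x).out x := mk_eq_mk_iff.mp (mk_out _)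

theorem length_mk (x : α) : (mk σ x).length = Function.minimalPeriod σ x := by
  obtain ⟨n, hn⟩ := sameCycle_out_mk (σ := σ) x
  rw [length]
  exact (minimalPeriod_apply_of_commute ((Commute.refl σ).zpow_left n) _).symm.trans
    (congrArg _ hn)

theorem length_le_card [Fintype α] (c : PermCycle σ) : c.length ≤ Fintype.card α :=
  Function.minimalPeriod_le_card

theorem length_pos [Finite α] (c : PermCycle σ) : 0 < c.length :=
  Function.minimalPeriod_pos_of_mem_periodicPts (σ.injective.mem_periodicPts _)

/-- The points on a cycle `c` labelled by `ZMod c.length`, the label counting the steps from the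
representative of `c`. -/
noncomputable def sigmaZModEquiv (σ : Perm α) : (Σ c : PermCycle σ, ZMod c.length) ≃ α :=
  ((selfEquivSigmaOrbits (Subgroup.zpowers σ) α).trans
    (sigmaCongrRight fun c => orbitZPowersEquiv σ c.out)).symm

theorem sigmaZModEquiv_intCast (c : PermCycle σ) (n : ℤ) :
    sigmaZModEquiv σ ⟨c, n⟩ = (σ ^ n) c.out :=
  congrArg Subtype.val (orbitZPowersEquiv_symm_apply' σ c.out n)

theorem sigmaZModEquiv_add_one (c : PermCycle σ) (k : ZMod c.length) :
    sigmaZModEquiv σ ⟨c, k + 1⟩ = σ (sigmaZModEquiv σ ⟨c, k⟩) := by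
  obtain ⟨n, rfl⟩ := ZMod.intCast_surjective k
  rw [← Int.cast_one, ← Int.cast_add, sigmaZModEquiv_intCast, sigmaZModEquiv_intCast,
    add_comm, zpow_add, zpow_one, Perm.mul_apply]

/-- Cycles of equal length grouped together. -/
noncomputable def sigmaLengthEquiv {N : ℕ} (hN : ∀ c : PermCycle σ, c.length < N) :
    (Σ i : Fin N, {c : PermCycle σ // c.length = i} × Multiplicative (ZMod i)) ≃
      Σ c : PermCycle σ, ZMod c.length where
  toFun x := ⟨x.2.1, cast (congrArg ZMod x.2.1.2.symm) x.2.2.toAdd⟩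
  invFun x := ⟨⟨x.1.length, hN x.1⟩, ⟨x.1, rfl⟩, .ofAdd x.2⟩
  left_inv := by
    rintro ⟨⟨i, hi⟩, ⟨c, hc⟩, k⟩
    dsimp only at hc
    subst hc
    rfl
  right_inv _ := rfl

theorem permCongr_sigmaCongrRight_shift {N : ℕ} (hN : ∀ c : PermCycle σ, c.length < N) :
    ((sigmaLengthEquiv hN).trans (sigmaZModEquiv σ)).permCongr
      (Perm.sigmaCongrRight fun i : Fin N => Wreath.shift {c : PermCycle σ // c.length = i}
        (Multiplicative.ofAdd (1 : ZMod i))) = σ := by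
  ext x
  obtain ⟨⟨c, k⟩, rfl⟩ := (sigmaZModEquiv σ).surjective x
  rw [← sigmaZModEquiv_add_one, permCongr_apply, symm_trans_apply, symm_apply_apply]
  rfl

/-- The centralizer of a permutation as a product of wreath products, one for each cycle length. -/
noncomputable def piWreathEquivCentralizer {N : ℕ} (hN : ∀ c : PermCycle σ, c.length < N) :
    (∀ i : Fin N, Wreath {c : PermCycle σ // c.length = i} (Multiplicative (ZMod i))) ≃*
      Subgroup.centralizer {σ} :=
  (MulEquiv.piCongrRight fun _ => Wreath.equivCentralizerShift _ mem_zpowers_ofAdd_one).trans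
    ((piCentralizerEquiv Fin.val_injective fun i x => (Wreath.minimalPeriod_shift _ x).trans
      ((orderOf_ofAdd_eq_addOrderOf _).trans (ZMod.addOrderOf_one i))).trans
    (centralizerCongr ((sigmaLengthEquiv hN).trans (sigmaZModEquiv σ)).permCongrHom
      (permCongr_sigmaCongrRight_shift hN)))

/-- The number of cycles of length `i`. -/
noncomputable def count (σ : Perm α) (i : ℕ) : ℕ := Nat.card {c : PermCycle σ // c.length = i}

theorem count_zero [Finite α] : count σ 0 = 0 :=
  have : IsEmpty {c : PermCycle σ // c.length = 0} := ⟨fun c => c.1.length_pos.ne' c.2⟩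
  Nat.card_of_isEmpty

theorem count_one : count σ 1 = Nat.card {x // σ x = x} := by
  have h_length (x : α) : (mk σ x).length = 1 ↔ σ x = x :=
    (length_mk x).symm ▸ Function.minimalPeriod_eq_one_iff_isFixedPt
  refine (Nat.card_congr (Equiv.ofBijective
    (fun x : {x // σ x = x} => ⟨mk σ x, (h_length x).mpr x.2⟩) ⟨?_, ?_⟩)).symm
  · intro x y hxy
    obtain ⟨n, hn⟩ := mk_eq_mk_iff.mp (congrArg Subtype.val hxy)
    exact Subtype.ext ((Perm.zpow_apply_eq_self_of_apply_eq_self x.2 n).symm.trans hn)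
  · rintro ⟨c, hc⟩
    rw [← mk_out c, h_length] at hc
    exact ⟨⟨c.out, hc⟩, Subtype.ext (mk_out c)⟩

theorem apply_out_ne {c : PermCycle σ} (hc : 2 ≤ c.length) : σ c.out ≠ c.out := by
  intro h
  have h_length : c.length = 1 := Function.minimalPeriod_eq_one_iff_isFixedPt.mpr h
  lia

section Fintype

variable [Fintype α] [DecidableEq α]

theorem length_mk_eq_card_support_cycleOf {x : α} (hx : σ x ≠ x) :
    (mk σ x).length = (σ.cycleOf x).support.card := by
  refine (length_mk x).trans (Nat.dvd_right_iff_eq.mp fun n => ?_)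
  rw [← Function.isPeriodicPt_iff_minimalPeriod_dvd,
    ← (σ.isCycleOn_support_cycleOf x).pow_apply_eq
      (Perm.mem_support_cycleOf_iff.mpr ⟨.rfl, Perm.mem_support.mpr hx⟩),
    ← Perm.iterate_eq_pow]
  rfl

theorem count_eq_count_cycleType {i : ℕ} (hi : 2 ≤ i) :
    count σ i = σ.cycleType.count i := by
  have h_moved {c : PermCycle σ} (hc : c.length = i) : c.out ∈ σ.support :=
    Perm.mem_support.mpr (apply_out_ne (hi.trans_eq hc.symm))
  rw [Perm.CycleType.count_def, ← Nat.card_eq_fintype_card]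
  refine Nat.card_congr (Equiv.ofBijective (fun c => ⟨⟨σ.cycleOf c.1.out,
    Perm.cycleOf_mem_cycleFactorsFinset_iff.mpr (h_moved c.2)⟩, ?_⟩) ⟨?_, ?_⟩)
  · change (σ.cycleOf c.1.out).support.card = i
    rw [← length_mk_eq_card_support_cycleOf (Perm.mem_support.mp (h_moved c.2)), mk_out, c.2]
  · rintro ⟨c, hc⟩ ⟨d, hd⟩ h
    have h_eq : σ.cycleOf c.out = σ.cycleOf d.out := congrArg (fun x => (x.1.1 : Perm α)) h
    rw [← Perm.sameCycle_iff_cycleOf_eq_of_mem_support (h_moved hc) (h_moved hd), ← mk_eq_mk_iff,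
      mk_out, mk_out] at h_eq
    exact Subtype.ext h_eq
  · rintro ⟨⟨f, hf⟩, hi⟩
    obtain ⟨x, hx⟩ := (Perm.mem_cycleFactorsFinset_iff.mp hf).1.nonempty_support
    obtain rfl := Perm.cycle_is_cycleOf hx hf
    refine ⟨⟨mk σ x, ?_⟩, Subtype.ext (Subtype.ext (sameCycle_out_mk x).cycleOf_eq)⟩
    rw [length_mk_eq_card_support_cycleOf (Perm.mem_support.mp (Perm.support_cycleOf_le σ x hx))]
    exact hi

theorem eq_count {lam : ℕ → ℕ} (h0 : lam 0 = 0)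
    (h1 : lam 1 = (Finset.univ.filter fun x => σ x = x).card)
    (h2 : ∀ i, 2 ≤ i → lam i = Multiset.count i σ.cycleType) : lam = count σ := by
  funext i
  match i with
  | 0 => rw [h0, count_zero]
  | 1 => rw [h1, count_one, Nat.card_eq_fintype_card, Fintype.card_subtype]
  | i + 2 => rw [h2 _ le_add_self, count_eq_count_cycleType le_add_self]

end Fintype

end PermCycle

end PermCycle

theorem abelianization_centralizer_perm_general {α : Type*} (σ : Perm α) [Finite (PermCycle σ)]
    {N : ℕ} (hN : ∀ c : PermCycle σ, c.length < N) :
    Nonempty (Abelianization (Subgroup.centralizer {σ}) ≃* ∀ i : Fin N,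
      Multiplicative (ZMod (if PermCycle.count σ i = 0 then 1 else i)) ×
      Multiplicative (ZMod (if 2 ≤ PermCycle.count σ i then 2 else 1))) := by
  refine ⟨(PermCycle.piWreathEquivCentralizer hN).symm.abelianizationCongr.trans
    ((abelianizationPiEquiv _).trans (MulEquiv.piCongrRight fun i => Nonempty.some ?_))⟩
  have h_card : Nat.card (Multiplicative (ZMod i)) = i := Nat.card_zmod i
  have h_wreath := Wreath.nonempty_abelianization_equiv {c : PermCycle σ // c.length = i}
    (Multiplicative (ZMod i))
  rwa [h_card] at h_wreath

end Development

/-- Let `σ ∈ S_n` have cycle type `1^{λ_1} 2^{λ_2} ⋯ n^{λ_n}` (where `λ_1` counts the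
fixed points and, for `i ≥ 2`, `λ_i` counts the cycles of length `i` in the disjoint
cycle decomposition of `σ`), and let `Z_σ` be its centralizer in `S_n`.  Then the
abelianization `Z_σ/Z_σ'` is isomorphic to
`(∏_{i : λ_i = 1} C_i) × (∏_{i : λ_i ≥ 2} (C_i × C_2))`.  Below, the `i`-th factor of
the direct product over `i = 0, 1, …, n` is `C_i × C_1 ≅ C_i` when `λ_i = 1`,
`C_i × C_2` when `λ_i ≥ 2`, and `C_1 × C_1 ≅ 1` when `λ_i = 0`; the cyclic group `C_k`
is realized as `Multiplicative (ZMod k)`. -/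
theorem abelianization_centralizer_perm (n : ℕ) (σ : Equiv.Perm (Fin n))
    (lam : ℕ → ℕ)
    (h0 : lam 0 = 0)
    (h1 : lam 1 = (Finset.univ.filter fun x : Fin n => σ x = x).card)
    (h2 : ∀ i, 2 ≤ i → lam i = Multiset.count i σ.cycleType) :
    Nonempty
      (Abelianization (Subgroup.centralizer ({σ} : Set (Equiv.Perm (Fin n)))) ≃*
        (∀ i : Fin (n + 1),
          Multiplicative (ZMod (if lam (i : ℕ) = 0 then 1 else (i : ℕ))) ×
          Multiplicative (ZMod (if 2 ≤ lam (i : ℕ) then 2 else 1)))) := by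
  rw [PermCycle.eq_count h0 h1 h2]
  exact abelianization_centralizer_perm_general σ fun c =>
    Nat.lt_succ_of_le (c.length_le_card.trans_eq (Fintype.card_fin n))
end

section
/- Let σ ∈ S_n have cycle type 1^{λ_1} 2^{λ_2} ⋯ n^{λ_n}, let Z_σ be its centralizer in S_n, and let F be a field containing a primitive root of unity of order |Z_σ|. Then the number of group homomorphisms Z_σ → Fˣ equals γ_C := (∏_{i : λ_i = 1} i) · (∏_{i : λ_i ≥ 2} 2i). -/
/-!
A permutation commuting with `σ` preserves the length of the cycle through each point, so `Z_σ` is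
the direct product, over the cycle lengths `i` of `σ`, of the centralizers of the restrictions of
`σ` to the union of its `i`-cycles. If `σ` consists of `m` cycles of the same length `i`, then the
cyclic group `⟨σ⟩` acts freely with `m` orbits, and `Z_σ` is the wreath product `⟨σ⟩ ≀ S_m`. A
homomorphism from `C ≀ S_m` to a commutative group restricts to an `S_m`-invariant homomorphism on
the base `C ^ m`, that is, to a single homomorphism on `C`, and to a homomorphism on `S_m`, which
factors through the sign. With values in the units of `M` there are `|μ_i(M)|` choices for the
former and, if `m ≥ 2`, `|μ_2(M)|` choices for the latter. These numbers are `i` and `2`, because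
the exponent of `Z_σ` is divisible by `i`, and by `2` if `m ≥ 2`.
-/

open Equiv Function MulAction

section Hom

variable {G H N A : Type*} [Group G] [Group H] [Group N] [CommGroup A]

theorem map_centralizer_singleton {f : G →* H} (hf : Injective f) {g : G}
    (hg : Subgroup.centralizer {f g} ≤ f.range) :
    (Subgroup.centralizer {g}).map f = Subgroup.centralizer {f g} := by
  refine le_antisymm (Subgroup.map_le_iff_le_comap.2 fun x hx => ?_) fun y hy => ?_
  · rw [Subgroup.mem_centralizer_singleton_iff] at hx
    rw [Subgroup.mem_comap, Subgroup.mem_centralizer_singleton_iff, ← map_mul, ← map_mul, hx]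
  · obtain ⟨x, rfl⟩ := hg hy
    rw [Subgroup.mem_centralizer_singleton_iff, ← map_mul, ← map_mul] at hy
    exact ⟨x, Subgroup.mem_centralizer_singleton_iff.2 (hf hy), rfl⟩

/-- The isomorphism of centralizers induced by an injective homomorphism whose range contains the
centralizer of the image. -/
noncomputable def centralizerEquivOfInjective {f : G →* H} (hf : Injective f) {g : G} {h : H}
    (hgh : f g = h) (hh : Subgroup.centralizer {h} ≤ f.range) :
    Subgroup.centralizer {g} ≃* Subgroup.centralizer {h} :=
  ((Subgroup.centralizer {g}).equivMapOfInjective f hf).trans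
    (MulEquiv.subgroupCongr (by subst hgh; exact map_centralizer_singleton hf hh))

/-- The centralizer of an element of a product of groups, as the product of the centralizers of its
components. -/
def centralizerPiEquiv {ι : Type*} {G : ι → Type*} [∀ i, Group (G i)] (g : ∀ i, G i) :
    Subgroup.centralizer {g} ≃* ∀ i, Subgroup.centralizer {g i} where
  toFun x i := ⟨x.1 i, Subgroup.mem_centralizer_singleton_iff.2
    (congrFun (Subgroup.mem_centralizer_singleton_iff.1 x.2) i)⟩
  invFun x := ⟨fun i => (x i).1, Subgroup.mem_centralizer_singleton_iff.2
    (funext fun i => Subgroup.mem_centralizer_singleton_iff.1 (x i).2)⟩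
  map_mul' _ _ := rfl

theorem natCard_monoidHom_pi {ι : Type*} [Fintype ι] (G : ι → Type*) [∀ i, Group (G i)]
    (A : Type*) [CommGroup A] :
    Nat.card ((∀ i, G i) →* A) = ∏ i, Nat.card (G i →* A) := by
  classical
  rw [← Nat.card_pi, ← Nat.card_congr (MonoidHom.noncommPiCoprodEquiv (N := G) (M := A))]
  exact Nat.card_congr (Equiv.subtypeUnivEquiv fun f i j _ x y => Commute.all _ _)

theorem natCard_monoidHom_of_isCyclic (G M : Type*) [Group G] [IsCyclic G] [CommMonoid M] :
    Nat.card (G →* Mˣ) = Nat.card (rootsOfUnity (Nat.card G) M) := by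
  let := IsCyclic.commGroup (α := G)
  obtain ⟨e⟩ := IsCyclic.monoidHom_mulEquiv_rootsOfUnity G Mˣ
  exact Nat.card_congr (e.trans (rootsOfUnityUnitsMulEquiv M (Nat.card G))).toEquiv

theorem ker_sign_le_ker {L : Type*} [Fintype L] [DecidableEq L] (f : Perm L →* A) :
    (Perm.sign : Perm L →* ℤˣ).ker ≤ f.ker := by
  change alternatingGroup L ≤ f.ker
  rw [← Perm.closure_three_cycles_eq_alternating, Subgroup.closure_le]
  intro g (hg : g.IsThreeCycle)
  -- the square of a 3-cycle is again a 3-cycle, hence conjugate to it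
  have hconj : IsConj g (g * g) :=
    Perm.isConj_iff_cycleType_eq.2 (hg.cycleType.trans hg.isThreeCycle_sq.cycleType.symm)
  have hf : f g = f g * f g := by rw [← map_mul]; exact isConj_iff_eq.1 (f.map_isConj hconj)
  exact left_eq_mul.1 hf

theorem natCard_monoidHom_perm (L M : Type*) [Finite L] [Nontrivial L] [CommMonoid M] :
    Nat.card (Perm L →* Mˣ) = Nat.card (rootsOfUnity 2 M) := by
  classical
  have := Fintype.ofFinite L
  have e : (Perm L →* Mˣ) ≃ (ℤˣ →* Mˣ) :=
    (Equiv.subtypeUnivEquiv ker_sign_le_ker).symm.trans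
      (Perm.sign.liftOfSurjective (Perm.sign_surjective L))
  rw [Nat.card_congr e, natCard_monoidHom_of_isCyclic, Nat.card_eq_fintype_card (α := ℤˣ),
    Fintype.card_units_int]

/-- Homomorphisms from a semidirect product `N ⋊ G` to a commutative group `A`, as pairs of a
`G`-invariant homomorphism on `N` and a homomorphism on `G`. -/
def semidirectProductHomEquiv (φ : G →* MulAut N) :
    (N ⋊[φ] G →* A) ≃ {f : N →* A // ∀ g n, f (φ g n) = f n} × (G →* A) where
  toFun F := ⟨⟨F.comp SemidirectProduct.inl, fun g n => by
    simp [SemidirectProduct.inl_aut]⟩, F.comp SemidirectProduct.inr⟩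
  invFun p := SemidirectProduct.lift p.1 p.2 fun g => by ext n; simp [p.1.2 g n]
  left_inv F := by apply SemidirectProduct.hom_ext <;> simp
  right_inv p := by ext <;> simp

end Hom

/-- The wreath product `C ≀ Perm L`. The permutation `g` acts on the base group `L → C` by
`(g • v) l = v (g⁻¹ l)`. -/
abbrev PermWreathProduct (C L : Type*) [Group C] :=
  (L → C) ⋊[mulAutArrow (G := Perm L) (A := L) (M := C)] Perm L

namespace PermWreathProduct

variable {C L : Type*} [Group C]

theorem mulAutArrow_perm_apply (g : Perm L) (v : L → C) (l : L) :
    mulAutArrow g v l = v (g⁻¹ l) := rfl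

theorem mulAutArrow_mulSingle [DecidableEq L] (g : Perm L) (l : L) (c : C) :
    mulAutArrow g (Pi.mulSingle l c : L → C) = Pi.mulSingle (g l) c := by
  ext m
  simp only [mulAutArrow_perm_apply, Pi.mulSingle_apply, Perm.inv_eq_iff_eq]

/-- Homomorphisms on `L → C` invariant under permutations of the coordinates, identified with
homomorphisms on `C` by restriction to the coordinate `l₀`. -/
def invariantHomEquiv {A : Type*} [CommGroup A] [Fintype L] [DecidableEq L] (l₀ : L) :
    {f : (L → C) →* A // ∀ (g : Perm L) v, f (mulAutArrow g v) = f v} ≃ (C →* A) where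
  toFun f := f.1.comp (MonoidHom.mulSingle (fun _ => C) l₀)
  invFun χ := ⟨∏ l, χ.comp (Pi.evalMonoidHom _ l), fun g v => by
    simpa [-mulAutArrow_apply_apply, mulAutArrow_perm_apply] using
      Equiv.prod_comp g⁻¹ fun l => χ (v l)⟩
  left_inv f := by
    ext1
    refine MonoidHom.pi_ext fun l c => ?_
    have hsingle : f.1 (Pi.mulSingle l₀ c) = f.1 (Pi.mulSingle l c) := by
      rw [← f.2 (swap l₀ l), mulAutArrow_mulSingle, swap_apply_left]
    simp [Pi.mulSingle_apply, apply_ite, hsingle]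
  right_inv χ := by
    ext c
    simp [Pi.mulSingle_apply, apply_ite]

theorem natCard_monoidHom (C L A : Type*) [Group C] [CommGroup A] [Finite L] [Nonempty L] :
    Nat.card (PermWreathProduct C L →* A) = Nat.card (C →* A) * Nat.card (Perm L →* A) := by
  classical
  have := Fintype.ofFinite L
  rw [Nat.card_congr (semidirectProductHomEquiv _), Nat.card_prod,
    Nat.card_congr (invariantHomEquiv (Classical.arbitrary L))]

/-- The action of `C ≀ Perm L` on `L × C`, where the base group acts by left multiplication in
each fibre `{l} × C`. -/
def toPerm (C L : Type*) [Group C] : PermWreathProduct C L →* Perm (L × C) :=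
  MonoidHom.mk' (fun w =>
    { toFun := fun p => (w.right p.1, w.left (w.right p.1) * p.2)
      invFun := fun p => (w.right⁻¹ p.1, (w.left p.1)⁻¹ * p.2)
      left_inv := fun p => by simp
      right_inv := fun p => by simp }) fun a b => by
    ext p
    · simp
    · simp [-mulAutArrow_apply_apply, mulAutArrow_perm_apply, mul_assoc]

theorem toPerm_apply (w : PermWreathProduct C L) (l : L) (x : C) :
    toPerm C L w (l, x) = (w.right l, w.left (w.right l) * x) := rfl

theorem toPerm_injective : Injective (toPerm C L) := by
  intro v w h
  have happly (l : L) : (v.right l, v.left (v.right l)) = (w.right l, w.left (w.right l)) := by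
    simpa only [toPerm_apply, mul_one] using DFunLike.congr_fun h (l, 1)
  have hright : v.right = w.right := Equiv.ext fun l => congrArg Prod.fst (happly l)
  refine SemidirectProduct.ext (funext fun l => ?_) hright
  simpa [hright] using congrArg Prod.snd (happly (v.right⁻¹ l))

/-- Right multiplication by `c` in each fibre of `L × C → L`. -/
def mulRightPerm (L : Type*) (c : C) : Perm (L × C) :=
  (Equiv.refl L).prodCongr (Equiv.mulRight c)

theorem mulRightPerm_apply (c : C) (l : L) (x : C) : mulRightPerm L c (l, x) = (l, x * c) := rfl

theorem mulRightPerm_zpow (c : C) (k : ℤ) : mulRightPerm L c ^ k = mulRightPerm L (c ^ k) := by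
  let f : Perm C →* Perm (L × C) :=
    { toFun := fun e => (Equiv.refl L).prodCongr e, map_one' := rfl, map_mul' := fun _ _ => rfl }
  exact (map_zpow f (Equiv.mulRight c) k).symm.trans (congrArg f (Equiv.zpow_mulRight c k))

theorem commute_toPerm_mulRightPerm (w : PermWreathProduct C L) (c : C) :
    Commute (toPerm C L w) (mulRightPerm L c) :=
  Equiv.ext fun ⟨l, x⟩ => by
    simp only [Perm.mul_apply, toPerm_apply, mulRightPerm_apply, mul_assoc]

section Generator

variable {c : C} {t : Perm (L × C)}

theorem apply_eq_of_commute_mulRightPerm (hc : ∀ x, x ∈ Subgroup.zpowers c)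
    (ht : Commute t (mulRightPerm L c)) (l : L) (x : C) :
    t (l, x) = ((t (l, 1)).1, (t (l, 1)).2 * x) := by
  obtain ⟨k, rfl⟩ := hc x
  have hk : Commute t (mulRightPerm L (c ^ k)) := mulRightPerm_zpow (L := L) c k ▸ ht.zpow_right k
  calc t (l, c ^ k) = t (mulRightPerm L (c ^ k) (l, 1)) := by rw [mulRightPerm_apply, one_mul]
    _ = mulRightPerm L (c ^ k) (t (l, 1)) := DFunLike.congr_fun hk.eq (l, 1)

theorem bijective_fst_apply_one (hc : ∀ x, x ∈ Subgroup.zpowers c)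
    (ht : Commute t (mulRightPerm L c)) : Bijective fun l => (t (l, 1)).1 := by
  have happly := apply_eq_of_commute_mulRightPerm hc ht
  refine ⟨fun l l' h => ?_, fun m => ?_⟩
  · have hl : t (l, (t (l, 1)).2⁻¹) = t (l', (t (l', 1)).2⁻¹) := by
      rw [happly l, happly l', mul_inv_cancel, mul_inv_cancel]
      exact congrArg (·, 1) h
    exact congrArg Prod.fst (t.injective hl)
  · obtain ⟨⟨l, x⟩, hlx⟩ := t.surjective (m, 1)
    rw [happly] at hlx
    exact ⟨l, congrArg Prod.fst hlx⟩

theorem range_toPerm (hc : ∀ x, x ∈ Subgroup.zpowers c) :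
    (toPerm C L).range = Subgroup.centralizer {mulRightPerm L c} := by
  ext t
  rw [Subgroup.mem_centralizer_singleton_iff]
  constructor
  · rintro ⟨w, rfl⟩
    exact commute_toPerm_mulRightPerm w c
  · intro ht
    let π : Perm L := Equiv.ofBijective _ (bijective_fst_apply_one hc ht)
    refine ⟨⟨fun l => (t (π⁻¹ l, 1)).2, π⟩, Equiv.ext fun ⟨l, x⟩ => ?_⟩
    rw [apply_eq_of_commute_mulRightPerm hc ht, toPerm_apply]
    simp [π]

end Generator

/-- For a generator `c` of `C`, the centralizer of right multiplication by `c` on `L × C` is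
`C ≀ Perm L`. -/
noncomputable def equivCentralizer {c : C} (hc : ∀ x, x ∈ Subgroup.zpowers c) :
    PermWreathProduct C L ≃* Subgroup.centralizer {mulRightPerm L c} :=
  (MonoidHom.ofInjective toPerm_injective).trans (MulEquiv.subgroupCongr (range_toPerm hc))

end PermWreathProduct

section MinimalPeriod

variable {X : Type*} {σ : Perm X}

theorem orderOf_eq_of_minimalPeriod_eq [Nonempty X] {i : ℕ} (h : ∀ x, minimalPeriod σ x = i) :
    orderOf σ = i := by
  refine Nat.dvd_right_iff_eq.1 fun k => ?_
  rw [orderOf_dvd_iff_pow_eq_one, Equiv.ext_iff]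
  have hfix (x : X) : (σ ^ k) x = x ↔ i ∣ k := by
    rw [← h x, ← isPeriodicPt_iff_minimalPeriod_dvd, IsPeriodicPt, IsFixedPt, Perm.iterate_eq_pow]
  simp only [Perm.one_apply, hfix, forall_const]

theorem minimalPeriod_apply_of_commute_s9 {τ : Perm X} (h : Commute τ σ) (x : X) :
    minimalPeriod σ (τ x) = minimalPeriod σ x := by
  refine minimalPeriod_eq_minimalPeriod_iff.2 fun k => ?_
  have hk : (σ ^ k) (τ x) = τ ((σ ^ k) x) := (DFunLike.congr_fun (h.pow_right k).eq x).symm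
  rw [IsPeriodicPt, IsPeriodicPt, IsFixedPt, IsFixedPt, Perm.iterate_eq_pow, hk,
    τ.apply_eq_iff_eq]

theorem minimalPeriod_subtypePerm {q : X → Prop} (hq : ∀ x, q (σ x) ↔ q x) (x : {x // q x}) :
    minimalPeriod (σ.subtypePerm hq) x = minimalPeriod σ x := by
  refine minimalPeriod_eq_minimalPeriod_iff.2 fun k => ?_
  rw [IsPeriodicPt, IsPeriodicPt, IsFixedPt, IsFixedPt, Perm.iterate_eq_pow, Perm.iterate_eq_pow,
    Perm.subtypePerm_pow, Subtype.ext_iff, Perm.subtypePerm_apply]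

theorem minimalPeriod_eq_card_of_isCycleOn {s : Finset X} {x : X} (hs : σ.IsCycleOn s)
    (hx : x ∈ s) : minimalPeriod σ x = s.card := by
  refine Nat.dvd_right_iff_eq.1 fun k => ?_
  rw [← isPeriodicPt_iff_minimalPeriod_dvd, ← hs.pow_apply_eq hx, IsPeriodicPt, IsFixedPt,
    Perm.iterate_eq_pow]

end MinimalPeriod

section FreePerm

variable {X : Type*} {σ : Perm X}

theorem stabilizer_zpowers_eq_bot {x : X} (h : minimalPeriod σ x = orderOf σ) :
    stabilizer (Subgroup.zpowers σ) x = ⊥ := by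
  rw [eq_bot_iff]
  rintro ⟨_, k, rfl⟩ hk
  have hdvd : (minimalPeriod (σ • ·) x : ℤ) ∣ k := zpow_smul_eq_iff_minimalPeriod_dvd.1 hk
  exact Subtype.ext (orderOf_dvd_iff_zpow_eq_one.1 (h ▸ hdvd))

theorem exists_permCongrHom_eq_mulRightPerm (h : ∀ x, minimalPeriod σ x = orderOf σ) :
    ∃ e : X ≃ Quotient (orbitRel (Subgroup.zpowers σ) X) × Subgroup.zpowers σ,
      e.permCongrHom σ = PermWreathProduct.mulRightPerm _ ⟨σ, Subgroup.mem_zpowers σ⟩ := by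
  let e := selfEquivOrbitsQuotientProd fun x => stabilizer_zpowers_eq_bot (h x)
  have he (ω) (g : Subgroup.zpowers σ) : e.symm (ω, g) = g • ω.out := rfl
  refine ⟨e, Equiv.ext fun ⟨ω, g⟩ => ?_⟩
  change e (σ (e.symm (ω, g))) = (ω, g * ⟨σ, Subgroup.mem_zpowers σ⟩)
  have hcomm : g * ⟨σ, Subgroup.mem_zpowers σ⟩ = ⟨σ, Subgroup.mem_zpowers σ⟩ * g :=
    mul_comm' _ _
  rw [← Equiv.eq_symm_apply, he, he, hcomm, mul_smul]
  rfl

theorem nonempty_centralizer_mulEquiv_permWreathProduct (h : ∀ x, minimalPeriod σ x = orderOf σ) :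
    Nonempty (Subgroup.centralizer {σ} ≃*
      PermWreathProduct (Subgroup.zpowers σ) (Quotient (orbitRel (Subgroup.zpowers σ) X))) := by
  obtain ⟨e, he⟩ := exists_permCongrHom_eq_mulRightPerm h
  have hgen (g : Subgroup.zpowers σ) :
      g ∈ Subgroup.zpowers (⟨σ, Subgroup.mem_zpowers σ⟩ : Subgroup.zpowers σ) := by
    obtain ⟨_, k, rfl⟩ := g
    exact ⟨k, rfl⟩
  let f : Perm X →* Perm (Quotient (orbitRel (Subgroup.zpowers σ) X) × Subgroup.zpowers σ) :=
    e.permCongrHom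
  have hf : Bijective f := e.permCongrHom.bijective
  exact ⟨(centralizerEquivOfInjective hf.injective he fun τ _ => hf.surjective τ).trans
    (PermWreathProduct.equivCentralizer hgen).symm⟩

theorem natCard_monoidHom_centralizer_of_minimalPeriod_eq [Finite X] [Nonempty X] {i m : ℕ}
    (h : ∀ x, minimalPeriod σ x = i) (hcard : Nat.card X = m * i) (M : Type*) [CommMonoid M] :
    Nat.card (Subgroup.centralizer {σ} →* Mˣ) =
      Nat.card (rootsOfUnity i M) * if 2 ≤ m then Nat.card (rootsOfUnity 2 M) else 1 := by
  obtain rfl := orderOf_eq_of_minimalPeriod_eq h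
  let Ω := Quotient (orbitRel (Subgroup.zpowers σ) X)
  obtain ⟨e⟩ := nonempty_centralizer_mulEquiv_permWreathProduct h
  obtain ⟨f, -⟩ := exists_permCongrHom_eq_mulRightPerm h
  have hΩ : Nat.card Ω = m := by
    rw [Nat.card_congr f, Nat.card_prod, Nat.card_zpowers] at hcard
    exact Nat.eq_of_mul_eq_mul_right (orderOf_pos σ) hcard
  have : Nonempty Ω := Nonempty.map (Quotient.mk _) ‹Nonempty X›
  rw [Nat.card_congr (e.monoidHomCongrLeftEquiv (N := Mˣ)), PermWreathProduct.natCard_monoidHom,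
    natCard_monoidHom_of_isCyclic, Nat.card_zpowers]
  congr 1
  split_ifs with hm
  · have : Nontrivial Ω := Finite.one_lt_card_iff_nontrivial.1 (hΩ ▸ hm)
    exact natCard_monoidHom_perm Ω M
  · have : Subsingleton Ω := Finite.card_le_one_iff_subsingleton.1 (by omega)
    exact Nat.card_unique

end FreePerm

section Fibers

variable {X ι : Type*} {σ : Perm X} {p : X → ι}

/-- The restriction of `σ` to the fibre of `p` over `i`. -/
def fiberPerm (hσ : ∀ x, p (σ x) = p x) (i : ι) : Perm {x // p x = i} :=
  σ.subtypePerm fun x => by rw [hσ]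

variable (p) in
/-- The permutation glued from permutations of the fibres of `p`. -/
def permOfFibers : (∀ i, Perm {x // p x = i}) →* Perm X :=
  (Equiv.sigmaFiberEquiv p).permCongrHom.toMonoidHom.comp (Perm.sigmaCongrRightHom _)

theorem permOfFibers_injective : Injective (permOfFibers p) :=
  (Equiv.sigmaFiberEquiv p).permCongrHom.injective.comp Perm.sigmaCongrRightHom_injective

theorem permOfFibers_fiberPerm (hσ : ∀ x, p (σ x) = p x) : permOfFibers p (fiberPerm hσ) = σ := rfl

/-- If every permutation commuting with `σ` preserves `p`, then the centralizer of `σ` is the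
product of the centralizers of the restrictions of `σ` to the fibres of `p`. -/
noncomputable def centralizerEquivPiFiberPerm (hp : ∀ τ, Commute τ σ → ∀ x, p (τ x) = p x) :
    Subgroup.centralizer {σ} ≃*
      ∀ i, Subgroup.centralizer {fiberPerm (hp σ (Commute.refl σ)) i} :=
  (centralizerEquivOfInjective permOfFibers_injective (permOfFibers_fiberPerm _) fun τ hτ =>
    have hcomm : Commute τ σ := Subgroup.mem_centralizer_singleton_iff.1 hτ
    ⟨fiberPerm (hp τ hcomm), permOfFibers_fiberPerm (hp τ hcomm)⟩).symm.trans
      (centralizerPiEquiv _)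

end Fibers

section CycleType

variable {α : Type*} [Fintype α] [DecidableEq α] (σ : Perm α)

theorem count_one_parts_partition :
    σ.partition.parts.count 1 = Fintype.card α - σ.cycleType.sum := by
  have h : σ.cycleType.count 1 = 0 :=
    Multiset.count_eq_zero.2 fun h => lt_irrefl 1 (Perm.one_lt_of_mem_cycleType h)
  rw [Perm.parts_partition, Multiset.count_add, h, Multiset.count_replicate_self, zero_add,
    Perm.sum_cycleType]

theorem card_filter_apply_eq_self :
    (Finset.univ.filter fun x => σ x = x).card = σ.partition.parts.count 1 := by
  rw [count_one_parts_partition, ← Perm.card_fixedPoints]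
  exact (Fintype.card_subtype _).symm

theorem count_parts_partition_of_ne_one {i : ℕ} (hi : i ≠ 1) :
    σ.partition.parts.count i = σ.cycleType.count i := by
  rw [Perm.parts_partition, Multiset.count_add, Multiset.count_replicate, if_neg hi.symm, add_zero]

theorem filter_minimalPeriod_eq_biUnion {i : ℕ} (hi : 2 ≤ i) :
    (Finset.univ.filter fun x => minimalPeriod σ x = i) =
      (σ.cycleFactorsFinset.filter fun c => c.support.card = i).biUnion Perm.support := by
  have hperiod {c : Perm α} (hc : c ∈ σ.cycleFactorsFinset) {x : α} (hx : x ∈ c.support) :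
      minimalPeriod σ x = c.support.card :=
    minimalPeriod_eq_card_of_isCycleOn (Perm.isCycleOn_support_of_mem_cycleFactorsFinset hc) hx
  ext x
  simp only [Finset.mem_biUnion, Finset.mem_filter, Finset.mem_univ, true_and]
  constructor
  · rintro rfl
    have hx : x ∈ σ.support := Perm.mem_support.2 fun hfix => by
      rw [minimalPeriod_eq_one_iff_isFixedPt.2 hfix] at hi
      omega
    have hc := Perm.cycleOf_mem_cycleFactorsFinset_iff.2 hx
    have hxc : x ∈ (σ.cycleOf x).support :=
      Perm.mem_support_cycleOf_iff.2 ⟨Perm.SameCycle.refl _ _, hx⟩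
    exact ⟨_, ⟨hc, (hperiod hc hxc).symm⟩, hxc⟩
  · rintro ⟨c, ⟨hc, rfl⟩, hx⟩
    exact hperiod hc hx

theorem natCard_minimalPeriod_eq {i : ℕ} (hi : i ≠ 0) :
    Nat.card {x // minimalPeriod σ x = i} = σ.partition.parts.count i * i := by
  rw [Nat.card_eq_fintype_card, Fintype.card_subtype]
  obtain rfl | hi : i = 1 ∨ 2 ≤ i := by omega
  · simp only [minimalPeriod_eq_one_iff_isFixedPt, IsFixedPt, card_filter_apply_eq_self, mul_one]
  · have hdisj : ((σ.cycleFactorsFinset.filter fun c => c.support.card = i : Finset (Perm α)) :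
        Set (Perm α)).PairwiseDisjoint Perm.support := fun c hc d hd hcd =>
      (σ.cycleFactorsFinset_pairwise_disjoint (Finset.mem_of_mem_filter _ hc)
        (Finset.mem_of_mem_filter _ hd) hcd).disjoint_support
    have hcount : σ.cycleType.count i =
        (σ.cycleFactorsFinset.filter fun c => c.support.card = i).card := by
      rw [Perm.cycleType_def, Multiset.count_map]
      simp only [eq_comm (a := i)]
      rfl
    rw [filter_minimalPeriod_eq_biUnion σ hi, Finset.card_biUnion hdisj,
      count_parts_partition_of_ne_one σ (by omega), hcount]
    exact Finset.sum_const_nat fun c hc => (Finset.mem_filter.1 hc).2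

theorem minimalPeriod_mem_parts_partition (x : α) : minimalPeriod σ x ∈ σ.partition.parts := by
  have hpos : minimalPeriod σ x ≠ 0 := (minimalPeriod_pos_of_mem_periodicPts
    (σ.injective.mem_periodicPts x)).ne'
  have : Nonempty {y // minimalPeriod σ y = minimalPeriod σ x} := ⟨⟨x, rfl⟩⟩
  have hcard := (natCard_minimalPeriod_eq σ hpos).symm.trans_ne Nat.card_pos.ne'
  exact Multiset.count_ne_zero.1 (left_ne_zero_of_mul hcard)

theorem natCard_monoidHom_centralizer (M : Type*) [CommMonoid M] :
    Nat.card (Subgroup.centralizer {σ} →* Mˣ) =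
      ∏ i ∈ σ.partition.parts.toFinset, Nat.card (rootsOfUnity i M) *
        if 2 ≤ σ.partition.parts.count i then Nat.card (rootsOfUnity 2 M) else 1 := by
  let p (x : α) : σ.partition.parts.toFinset :=
    ⟨minimalPeriod σ x, Multiset.mem_toFinset.2 (minimalPeriod_mem_parts_partition σ x)⟩
  have hp (τ) (hτ : Commute τ σ) (x) : p (τ x) = p x :=
    Subtype.ext (minimalPeriod_apply_of_commute_s9 hτ x)
  rw [Nat.card_congr ((centralizerEquivPiFiberPerm hp).monoidHomCongrLeftEquiv (N := Mˣ)),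
    natCard_monoidHom_pi, ← Finset.prod_coe_sort σ.partition.parts.toFinset]
  refine Finset.prod_congr rfl fun i _ => ?_
  have hi : i.1 ∈ σ.partition.parts := Multiset.mem_toFinset.1 i.2
  have hpos : i.1 ≠ 0 := (σ.partition.parts_pos hi).ne'
  have hcard : Nat.card {x // p x = i} = σ.partition.parts.count i.1 * i :=
    (Nat.card_congr (Equiv.subtypeEquivRight fun _ => Subtype.ext_iff)).trans
      (natCard_minimalPeriod_eq σ hpos)
  have : Nonempty {x // p x = i} := (Nat.card_ne_zero.1 (hcard.trans_ne
    (mul_ne_zero (Multiset.count_ne_zero.2 hi) hpos))).1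
  have hperiod (x : {x // p x = i}) : minimalPeriod (fiberPerm (hp σ (.refl σ)) i) x = i :=
    (minimalPeriod_subtypePerm _ x).trans (congrArg Subtype.val x.2)
  exact natCard_monoidHom_centralizer_of_minimalPeriod_eq hperiod hcard M

theorem dvd_exponent_centralizer {i : ℕ} (hi : i ∈ σ.partition.parts) :
    i ∣ Monoid.exponent (Subgroup.centralizer {σ}) := by
  let z : Subgroup.centralizer {σ} := ⟨σ, Subgroup.mem_centralizer_singleton_iff.2 rfl⟩
  have hdvd : i ∣ orderOf z := by
    rw [Subgroup.orderOf_mk]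
    rw [Perm.parts_partition, Multiset.mem_add] at hi
    obtain hi | hi := hi
    · exact Perm.dvd_of_mem_cycleType hi
    · exact Multiset.eq_of_mem_replicate hi ▸ one_dvd _
  exact hdvd.trans (Monoid.order_dvd_exponent z)

theorem factorial_count_dvd_natCard_centralizer (i : ℕ) :
    (σ.partition.parts.count i).factorial ∣ Nat.card (Subgroup.centralizer {σ}) := by
  rw [Perm.nat_card_centralizer]
  obtain rfl | hi := eq_or_ne i 1
  · rw [count_one_parts_partition]
    exact (dvd_mul_right _ _).mul_right _
  · rw [count_parts_partition_of_ne_one σ hi]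
    by_cases hmem : i ∈ σ.cycleType.toFinset
    · exact (Finset.dvd_prod_of_mem (fun n => (σ.cycleType.count n).factorial) hmem).mul_left _
    · rw [Multiset.mem_toFinset, ← Multiset.count_eq_zero] at hmem
      rw [hmem]
      exact one_dvd _

theorem two_dvd_exponent_centralizer {i : ℕ} (hi : 2 ≤ σ.partition.parts.count i) :
    2 ∣ Monoid.exponent (Subgroup.centralizer {σ}) := by
  have hcard : 2 ∣ Nat.card (Subgroup.centralizer {σ}) :=
    (Nat.dvd_factorial two_pos hi).trans (factorial_count_dvd_natCard_centralizer σ i)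
  obtain ⟨z, hz⟩ := exists_prime_orderOf_dvd_card' 2 hcard
  exact hz ▸ Monoid.order_dvd_exponent z

theorem eq_count_parts_partition {lam : ℕ → ℕ} (h0 : lam 0 = 0)
    (h1 : lam 1 = (Finset.univ.filter fun x => σ x = x).card)
    (h2 : ∀ i, 2 ≤ i → lam i = σ.cycleType.count i) (i : ℕ) :
    lam i = σ.partition.parts.count i := by
  obtain rfl | rfl | hi : i = 0 ∨ i = 1 ∨ 2 ≤ i := by omega
  · rw [h0, Multiset.count_eq_zero.2 fun h => (σ.partition.parts_pos h).ne' rfl]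
  · rw [h1, card_filter_apply_eq_self]
  · rw [h2 i hi, count_parts_partition_of_ne_one σ (by omega)]

end CycleType

theorem natCard_rootsOfUnity_of_dvd (M : Type*) [CommMonoid M] {m n : ℕ} [NeZero n]
    [HasEnoughRootsOfUnity M n] (h : m ∣ n) : Nat.card (rootsOfUnity m M) = m := by
  have : NeZero m := ⟨ne_zero_of_dvd_ne_zero (NeZero.ne n) h⟩
  have := HasEnoughRootsOfUnity.of_dvd M h
  exact HasEnoughRootsOfUnity.natCard_rootsOfUnity M m

theorem card_characters_centralizer_perm_general {α : Type*} [Fintype α] [DecidableEq α]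
    (σ : Perm α) (lam : ℕ → ℕ)
    (h0 : lam 0 = 0)
    (h1 : lam 1 = (Finset.univ.filter fun x => σ x = x).card)
    (h2 : ∀ i, 2 ≤ i → lam i = σ.cycleType.count i)
    (M : Type*) [CommMonoid M]
    [HasEnoughRootsOfUnity M (Monoid.exponent (Subgroup.centralizer {σ}))] :
    Nat.card (Subgroup.centralizer {σ} →* Mˣ) =
      (∏ i ∈ (Finset.range (Fintype.card α + 1)).filter fun i => lam i = 1, i) *
      (∏ i ∈ (Finset.range (Fintype.card α + 1)).filter fun i => 2 ≤ lam i, 2 * i) := by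
  have : NeZero (Monoid.exponent (Subgroup.centralizer {σ})) :=
    ⟨Monoid.exponent_ne_zero_of_finite⟩
  have hcount := eq_count_parts_partition σ h0 h1 h2
  have hmem (i) : i ∈ σ.partition.parts.toFinset ↔ lam i ≠ 0 := by
    rw [Multiset.mem_toFinset, hcount, Multiset.count_ne_zero]
  rw [natCard_monoidHom_centralizer, Finset.prod_filter, Finset.prod_filter,
    ← Finset.prod_mul_distrib]
  refine Finset.prod_subset_one_on_sdiff (fun i hi => ?_) (fun i hi => ?_) fun i hi => ?_
  · have hle := Multiset.le_sum_of_mem (Multiset.mem_toFinset.1 hi)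
    rw [σ.partition.parts_sum] at hle
    exact Finset.mem_range_succ_iff.2 hle
  · have hzero : lam i = 0 := not_not.1 ((hmem i).not.1 (Finset.mem_sdiff.1 hi).2)
    simp [hzero]
  · rw [natCard_rootsOfUnity_of_dvd M (dvd_exponent_centralizer σ (Multiset.mem_toFinset.1 hi)),
      ← hcount]
    split_ifs with htwo hone hone
    · omega
    · rw [natCard_rootsOfUnity_of_dvd M (two_dvd_exponent_centralizer σ (hcount i ▸ htwo)), one_mul,
        mul_comm]
    · rw [mul_one]
    · have := (hmem i).1 hi
      omega

/-- Let `σ ∈ S_n` have cycle type `1^{λ_1} 2^{λ_2} ⋯ n^{λ_n}` (where `λ_1` counts the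
fixed points and, for `i ≥ 2`, `λ_i` counts the cycles of length `i` in the disjoint
cycle decomposition of `σ`), let `Z_σ` be its centralizer in `S_n`, and let `F` be a
field containing a primitive root of unity of order `|Z_σ|`.  Then the number of group
homomorphisms `Z_σ → Fˣ` equals `γ_C = (∏_{i : λ_i = 1} i) · (∏_{i : λ_i ≥ 2} 2i)`. -/
theorem card_characters_centralizer_perm (n : ℕ) (σ : Equiv.Perm (Fin n))
    (lam : ℕ → ℕ)
    (h0 : lam 0 = 0)
    (h1 : lam 1 = (Finset.univ.filter fun x : Fin n => σ x = x).card)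
    (h2 : ∀ i, 2 ≤ i → lam i = Multiset.count i σ.cycleType)
    (F : Type*) [Field F] (ζ : F)
    (hζ : IsPrimitiveRoot ζ
      (Nat.card (Subgroup.centralizer ({σ} : Set (Equiv.Perm (Fin n)))))) :
    Nat.card ((Subgroup.centralizer ({σ} : Set (Equiv.Perm (Fin n)))) →* Fˣ) =
      (∏ i ∈ (Finset.range (n + 1)).filter fun i => lam i = 1, i) *
      (∏ i ∈ (Finset.range (n + 1)).filter fun i => 2 ≤ lam i, 2 * i) := by
  let Z := Subgroup.centralizer {σ}
  have : HasEnoughRootsOfUnity F (Nat.card Z) := ⟨⟨ζ, hζ⟩, inferInstance⟩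
  have := HasEnoughRootsOfUnity.of_dvd F (Group.exponent_dvd_nat_card (G := Z))
  simpa only [Fintype.card_fin] using card_characters_centralizer_perm_general σ lam h0 h1 h2 F
end

section
/- Let G = S_n with n a positive integer, n ≠ 6, let r be a ramification of G and u a fixed map from conjugacy classes to G with u(C) ∈ C. Then RSC(G, r, χ⃗, u) and RSC(G, r, χ⃗', u) are isomorphic if and only if for every C ∈ K_r(G) the multiset {χ_C^{(i)} : 1 ≤ i ≤ r_C} equals the multiset {χ'_C^{(i)} : 1 ≤ i ≤ r_C} (i.e., the two RSCs have the same type: for every character ξ of Z_{u(C)}, the number of indices i with χ_C^{(i)} = ξ equals the number of indices i with χ'_C^{(i)} = ξ). -/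
/-- A ramification system with characters `RSC(G, r, χ⃗, u)` on a group `G`:
a ramification `r` assigning a nonnegative integer `r C` to each conjugacy class `C`
of `G`; a map `u` from conjugacy classes to `G` with `u C ∈ C`; and, for each
conjugacy class `C`, an `r C`-tuple of characters of the centralizer `Z_{u C}`
(one-dimensional representations, i.e. group homomorphisms `Z_{u C} → ℂˣ`).
For classes with `r C = 0` the tuple of characters is empty, so `χ` carries
information exactly for the classes in `K_r(G) = {C : r C ≠ 0}`. -/
structure RSC (G : Type*) [Group G] where
  /-- the ramification -/
  r : ConjClasses G → ℕ
  /-- a choice of representative of each conjugacy class -/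
  u : ConjClasses G → G
  hu : ∀ C : ConjClasses G, ConjClasses.mk (u C) = C
  /-- the tuple of characters of `Z_{u C}` attached to each conjugacy class `C` -/
  chi : ∀ C : ConjClasses G, Fin (r C) →
    (Subgroup.centralizer ({u C} : Set G) →* ℂˣ)

/-- Isomorphism of ramification systems with characters (over the same group `G`),
following the definition of the paper: `RSC(G, r, χ⃗, u) ≅ RSC(G, r', χ⃗', u')` if there
are a group automorphism `φ` of `G`, for each conjugacy class `C` an element `h_C ∈ G`
with `φ(h_C u(C) h_C⁻¹) = u'(φ(C))`, and for each `C ∈ K_r(G)` a bijection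
`φ_C : I_C(r) ≃ I_{φ(C)}(r')` such that
`χ'_{φ(C)}^{(φ_C(i))}(φ(h_C h h_C⁻¹)) = χ_C^{(i)}(h)` for all `h ∈ Z_{u(C)}` and
all `i`. -/
def RSC.Iso {G : Type*} [Group G] (A B : RSC G) : Prop :=
  ∃ φ : G ≃* G,
    ∀ C : ConjClasses G, ∃ h : G,
      φ (h * A.u C * h⁻¹) = B.u (ConjClasses.map (φ : G →* G) C) ∧
      (A.r C ≠ 0 →
        ∃ e : Fin (A.r C) ≃ Fin (B.r (ConjClasses.map (φ : G →* G) C)),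
          ∀ (i : Fin (A.r C)) (x : G)
            (hx : x ∈ Subgroup.centralizer ({A.u C} : Set G))
            (hx' : φ (h * x * h⁻¹) ∈
              Subgroup.centralizer ({B.u (ConjClasses.map (φ : G →* G) C)} : Set G)),
            B.chi (ConjClasses.map (φ : G →* G) C) (e i) ⟨φ (h * x * h⁻¹), hx'⟩ =
              A.chi C i ⟨x, hx⟩)

/-!
An isomorphism given by an inner automorphism `φ = conj g` fixes every conjugacy class, and the
condition `φ (h_C * u C * h_C⁻¹) = u C` says that `g * h_C` centralizes `u C`. The characters of
index `i` and `φ_C i` thus differ by conjugation by an element of their own domain, which a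
homomorphism to a commutative group does not see. It remains to show that every automorphism of
the symmetric group on `α` is inner unless `α` has six elements.

If `α` has at least three elements, a transposition is an involution which does not commute with
all of its conjugates and whose product with each of them has order at most three. Conversely, an
involution `t` other than a transposition moves four points `a, t a, c, t c`. If `t` has a fixed
point, some product with a conjugate has order five; if `α` has only these four points, `t`
commutes with its conjugates; otherwise, since `α` does not have exactly six points, `t` contains
four 2-cycles and some product with a conjugate has order divisible by four. Hence automorphisms
permute the transpositions. The transpositions moving a given point `a` go to
transpositions moving a common point `g a`, and the automorphism is conjugation by `g`.
-/

open Equiv Equiv.Perm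

/-- An involution `t` of a group which belongs to a noncommutative class of 3-transpositions in the
sense of Fischer: the product of `t` with any of its conjugates has order at most three, and `t`
does not commute with all of them. Both conditions are invariant under isomorphisms. -/
structure IsThreeTransposition {G : Type*} [Group G] (t : G) : Prop where
  mul_self : t * t = 1
  mul_conj_pow (g : G) : (t * (g * t * g⁻¹)) ^ 2 = 1 ∨ (t * (g * t * g⁻¹)) ^ 3 = 1
  exists_not_commute : ∃ g, ¬Commute t (g * t * g⁻¹)

theorem IsThreeTransposition.map {G H : Type*} [Group G] [Group H] {t : G}
    (ht : IsThreeTransposition t) (φ : G ≃* H) : IsThreeTransposition (φ t) where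
  mul_self := by rw [← map_mul, ht.mul_self, map_one]
  mul_conj_pow g := by
    obtain ⟨g, rfl⟩ := φ.surjective g
    simpa only [← map_mul, ← map_inv, ← map_pow, map_eq_one_iff φ φ.injective]
      using ht.mul_conj_pow g
  exists_not_commute := by
    obtain ⟨g, hg⟩ := ht.exists_not_commute
    refine ⟨φ g, fun h ↦ hg (φ.injective ?_)⟩
    simpa only [map_mul, map_inv] using h.eq

section Swap

variable {α : Type*} [DecidableEq α]

theorem eq_swap_of_isSwap {s : Perm α} (hs : s.IsSwap) {x y : α} (hxy : x ≠ y)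
    (hx : s x ≠ x) (hy : s y ≠ y) : s = swap x y := by
  obtain ⟨a, b, -, rfl⟩ := hs
  rw [swap_apply_ne_self_iff] at hx hy
  grind [swap_comm]

theorem commute_swap_of_apply_eq_self {s : Perm α} {x y : α} (hx : s x = x) (hy : s y = y) :
    Commute s (swap x y) := by
  rw [commute_iff_eq, mul_swap_eq_swap_mul, hx, hy]

theorem not_commute_swap_swap {a b c : α} (hab : a ≠ b) (hac : a ≠ c) (hbc : b ≠ c) :
    ¬Commute (swap a b) (swap a c) := by
  intro h
  have := Perm.congr_fun h.eq a
  grind [Perm.mul_apply]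

theorem exists_eq_swap_of_not_commute {s t : Perm α} (hs : s.IsSwap) (ht : t.IsSwap)
    (h : ¬Commute s t) :
    ∃ p q r, p ≠ q ∧ p ≠ r ∧ q ≠ r ∧ s = swap p q ∧ t = swap p r := by
  obtain ⟨c, d, hcd, rfl⟩ := ht
  wlog hc : s c ≠ c generalizing c d
  · have hd : s d ≠ d := fun hd ↦ h (commute_swap_of_apply_eq_self (not_not.mp hc) hd)
    rw [swap_comm c d] at h ⊢
    exact this d c hcd.symm h hd
  have hsc : s = swap c (s c) := eq_swap_of_isSwap hs hc.symm hc (s.injective.ne hc)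
  refine ⟨c, s c, d, hc.symm, hcd, ?_, hsc, rfl⟩
  rintro rfl
  exact h (hsc ▸ Commute.refl _)

theorem swap_mul_swap_pow_three {a b c : α} (hab : a ≠ b) (hac : a ≠ c) (hbc : b ≠ c) :
    (swap a b * swap a c) ^ 3 = 1 := by
  ext x
  simp only [pow_succ, pow_zero, one_mul, Perm.mul_apply, swap_apply_def, Perm.one_apply]
  grind

theorem mul_pow_two_or_three_eq_one_of_isSwap {s t : Perm α} (hs : s.IsSwap) (ht : t.IsSwap) :
    (s * t) ^ 2 = 1 ∨ (s * t) ^ 3 = 1 := by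
  by_cases h : Commute s t
  · left
    obtain ⟨a, b, -, rfl⟩ := hs
    obtain ⟨c, d, -, rfl⟩ := ht
    rw [h.mul_pow, sq, sq, swap_mul_self, swap_mul_self, one_mul]
  · right
    obtain ⟨p, q, r, hpq, hpr, hqr, rfl, rfl⟩ := exists_eq_swap_of_not_commute hs ht h
    exact swap_mul_swap_pow_three hpq hpr hqr

theorem isThreeTransposition_of_isSwap (hα : 3 ≤ ENat.card α) {s : Perm α} (hs : s.IsSwap) :
    IsThreeTransposition s := by
  obtain ⟨a, b, hab, rfl⟩ := hs
  refine ⟨swap_mul_self a b, fun g ↦ ?_, ?_⟩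
  · rw [← swap_apply_apply]
    exact mul_pow_two_or_three_eq_one_of_isSwap ⟨a, b, hab, rfl⟩
      ⟨g a, g b, g.injective.ne hab, rfl⟩
  · obtain ⟨c, hca, hcb⟩ := ENat.exists_ne_ne_of_three_le hα a b
    refine ⟨swap b c, ?_⟩
    rw [← swap_apply_apply, swap_apply_of_ne_of_ne hab hca.symm, swap_apply_left]
    exact not_commute_swap_swap hab hca.symm hcb.symm

end Swap

section Recognition

variable {α : Type*} {t : Perm α}

theorem not_pow_two_or_three_eq_one_of_apply {p : Perm α} {a b c d : α} (hab : p a = b)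
    (hbc : p b = c) (hcd : p c = d) (hca : c ≠ a) (hda : d ≠ a) : ¬(p ^ 2 = 1 ∨ p ^ 3 = 1) := by
  subst hab hbc hcd
  rintro (h | h)
  · exact hca (Perm.congr_fun h a)
  · exact hda (Perm.congr_fun h a)

theorem mul_conj_apply_apply (ht : t * t = 1) {g : Perm α} {x : α} (hx : g (t x) = t x) :
    (t * (g * t * g⁻¹)) (g x) = x := by
  have hgx : g⁻¹ (g x) = x := g.symm_apply_apply x
  rw [Perm.mul_apply, Perm.mul_apply, Perm.mul_apply, hgx, hx]
  exact Perm.congr_fun ht x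

theorem not_isThreeTransposition_of_apply_eq_self {a c e : α} (ha : t a ≠ a) (hc : t c ≠ c)
    (hca : c ≠ a) (hcta : c ≠ t a) (he : t e = e) : ¬IsThreeTransposition t := by
  classical
  intro ht
  have hinv : ∀ x, t (t x) = x := Perm.congr_fun ht.mul_self
  -- For the 3-cycle `g = (a c e)`, the product `t * (g * t * g⁻¹)` is the 5-cycle
  -- `(e c a (t a) (t c))`.
  obtain ⟨g, hga, hgc, hge, hgta, hgtc⟩ : ∃ g : Perm α,
      g a = c ∧ g c = e ∧ g e = a ∧ g (t a) = t a ∧ g (t c) = t c := by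
    refine ⟨swap a c * swap c e, ?_, ?_, ?_, ?_, ?_⟩ <;> grind [Perm.mul_apply]
  have hpe := mul_conj_apply_apply ht.mul_self hgtc
  have hpc := mul_conj_apply_apply ht.mul_self hgta
  have hpa : (t * (g * t * g⁻¹)) a = t a := by
    simp only [Perm.mul_apply, Perm.inv_eq_iff_eq.mpr hge.symm, he, hge]
  rw [hgc] at hpe
  rw [hga] at hpc
  exact not_pow_two_or_three_eq_one_of_apply hpe hpc hpa (by grind) (by grind)
    (ht.mul_conj_pow g)

theorem not_isThreeTransposition_of_apply_notMem {a b c d : α} (hl : [a, b, c, d].Nodup)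
    (htl : ∀ x ∈ [a, b, c, d], t x ∉ [a, b, c, d]) : ¬IsThreeTransposition t := by
  classical
  intro ht
  -- On `a, b, c, d` the product of `t` with its conjugate by `g = (a b c d)` acts as `g⁻¹`.
  set g := [a, b, c, d].formPerm
  have hp : ∀ x ∈ [a, b, c, d], (t * (g * t * g⁻¹)) (g x) = x := fun x hx ↦
    mul_conj_apply_apply ht.mul_self (List.formPerm_apply_of_notMem (htl x hx))
  have hga : g a = b := List.formPerm_apply_lt_getElem _ hl 0 (by simp)
  have hgb : g b = c := List.formPerm_apply_lt_getElem _ hl 1 (by simp)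
  have hgc : g c = d := List.formPerm_apply_lt_getElem _ hl 2 (by simp)
  exact not_pow_two_or_three_eq_one_of_apply (hgc ▸ hp c (by simp)) (hgb ▸ hp b (by simp))
    (hga ▸ hp a (by simp)) (by grind) (by grind) (ht.mul_conj_pow g)

theorem encard_setOf_mem_of_nodup {l : List α} (hl : l.Nodup) : {x | x ∈ l}.encard = l.length := by
  classical
  rw [← List.coe_toFinset, Set.encard_coe_eq_coe_finsetCard, List.toFinset_card_of_nodup hl]

theorem exists_notMem_of_length_ne_card {l : List α} (hl : l.Nodup)
    (h : ENat.card α ≠ l.length) : ∃ x, x ∉ l := by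
  by_contra! hmem
  have huniv : {x | x ∈ l} = Set.univ := Set.eq_univ_of_forall hmem
  rw [← encard_setOf_mem_of_nodup hl, huniv, Set.encard_univ] at h
  exact h rfl

theorem commute_of_card_eq_four (hα : ENat.card α = 4) {s : Perm α} (hs : s * s = 1)
    (hs' : ∀ x, s x ≠ x) (ht : t * t = 1) (ht' : ∀ x, t x ≠ x) : Commute s t := by
  replace hs : ∀ x, s (s x) = x := Perm.congr_fun hs
  replace ht : ∀ x, t (t x) = x := Perm.congr_fun ht
  ext x
  by_contra hne
  rw [Perm.mul_apply, Perm.mul_apply] at hne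
  have hnodup : [x, s x, t x, s (t x), t (s x)].Nodup := by grind
  have hle := Set.encard_le_card (s := {y | y ∈ [x, s x, t x, s (t x), t (s x)]})
  rw [encard_setOf_mem_of_nodup hnodup, hα] at hle
  simp only [List.length_cons, List.length_nil] at hle
  norm_num at hle

theorem IsThreeTransposition.isSwap [DecidableEq α] (hα : ENat.card α ≠ 6)
    (ht : IsThreeTransposition t) : t.IsSwap := by
  have hinv : ∀ x, t (t x) = x := Perm.congr_fun ht.mul_self
  obtain ⟨g, hg⟩ := ht.exists_not_commute
  obtain ⟨a, ha⟩ : ∃ a, t a ≠ a := by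
    by_contra! h
    exact hg ((Perm.ext h : t = 1) ▸ Commute.one_left _)
  by_contra hswap
  obtain ⟨c, hc⟩ : ∃ c, t c ≠ swap a (t a) c := by
    by_contra! h
    exact hswap ⟨a, t a, ha.symm, Perm.ext h⟩
  have hfix : ∀ e, t e ≠ e := fun e he ↦
    not_isThreeTransposition_of_apply_eq_self ha (c := c) (by grind) (by grind) (by grind) he ht
  have hcard : ENat.card α ≠ 4 := fun h4 ↦ by
    refine hg (commute_of_card_eq_four h4 ht.mul_self hfix ?_ fun x hx ↦ hfix (g⁻¹ x) ?_)
    · rw [conj_mul, ht.mul_self, mul_one, mul_inv_cancel]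
    · rwa [Perm.eq_inv_iff_eq]
  obtain ⟨e, he⟩ := exists_notMem_of_length_ne_card (l := [a, t a, c, t c]) (by grind) hcard
  obtain ⟨k, hk⟩ := exists_notMem_of_length_ne_card (l := [a, t a, c, t c, e, t e]) (by grind) hα
  exact not_isThreeTransposition_of_apply_notMem (a := a) (b := c) (c := e) (d := k)
    (by grind) (by grind) ht

theorem isSwap_map_iff [DecidableEq α] (h3 : 3 ≤ ENat.card α) (h6 : ENat.card α ≠ 6)
    (φ : MulAut (Perm α)) (s : Perm α) : (φ s).IsSwap ↔ s.IsSwap := by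
  refine ⟨fun hs ↦ ?_, fun hs ↦ ((isThreeTransposition_of_isSwap h3 hs).map φ).isSwap h6⟩
  rw [← φ.symm_apply_apply s]
  exact ((isThreeTransposition_of_isSwap h3 hs).map φ.symm).isSwap h6

end Recognition

section SwapPreserving

theorem eq_of_forall_ne_eq_or_eq {α β : Type*} (hα : 3 ≤ ENat.card α) {f : α → β}
    (hf : Function.Injective f) {a : α} {y : β} (h : ∀ b ≠ a, y = f a ∨ y = f b) : y = f a := by
  obtain ⟨b, hba, -⟩ := ENat.exists_ne_ne_of_three_le hα a a
  obtain ⟨c, hca, hcb⟩ := ENat.exists_ne_ne_of_three_le hα a b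
  exact (h b hba).elim id fun hb ↦ (h c hca).elim id fun hc ↦ absurd (hf (hc.symm.trans hb)) hcb

variable {α : Type*} [DecidableEq α]

theorem exists_forall_map_swap_apply_ne (hα : 3 ≤ ENat.card α) {φ : MulAut (Perm α)}
    (hφ : ∀ s : Perm α, s.IsSwap → (φ s).IsSwap) (a : α) :
    ∃ p, ∀ b ≠ a, φ (swap a b) p ≠ p := by
  obtain ⟨b, hba, -⟩ := ENat.exists_ne_ne_of_three_le hα a a
  obtain ⟨c, hca, hcb⟩ := ENat.exists_ne_ne_of_three_le hα a b
  have hswap : ∀ x ≠ a, (φ (swap a x)).IsSwap := fun x hx ↦ hφ _ ⟨a, x, hx.symm, rfl⟩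
  have hcomm : ∀ x ≠ a, ∀ y ≠ a, x ≠ y → ¬Commute (φ (swap a x)) (φ (swap a y)) :=
    fun x hx y hy hxy h ↦ not_commute_swap_swap hx.symm hy.symm hxy <|
      φ.injective (by simpa only [map_mul] using h.eq)
  obtain ⟨p, q, r, hpq, hpr, hqr, hb, hc⟩ := exists_eq_swap_of_not_commute (hswap b hba)
    (hswap c hca) (hcomm b hba c hca hcb.symm)
  refine ⟨p, fun d hda hp ↦ ?_⟩
  have hdb : d ≠ b := by grind
  have hdc : d ≠ c := by grind
  -- A transposition fixing `p` but commuting with neither `(p q)` nor `(p r)` has to be `(q r)`.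
  have hq : φ (swap a d) q ≠ q := fun hq ↦
    hcomm d hda b hba hdb (hb ▸ commute_swap_of_apply_eq_self hp hq)
  have hr : φ (swap a d) r ≠ r := fun hr ↦
    hcomm d hda c hca hdc (hc ▸ commute_swap_of_apply_eq_self hp hr)
  have hbc : φ (swap a d) = φ (swap b c) := by
    rw [eq_swap_of_isSwap (hswap d hda) hqr hq hr, ← swap_mul_swap_mul_swap hca hcb,
      swap_comm c a, map_mul, map_mul, hb, hc, swap_comm p r,
      swap_mul_swap_mul_swap hpr.symm hqr.symm]
  grind [Perm.congr_fun (φ.injective hbc) a]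

theorem leftInverse_of_map_swap_apply_ne (hα : 3 ≤ ENat.card α) {φ : MulAut (Perm α)}
    (hφ : ∀ s : Perm α, s.IsSwap → (φ s).IsSwap) {f f' : α → α}
    (hf : ∀ a, ∀ b ≠ a, φ (swap a b) (f a) ≠ f a)
    (hf' : ∀ p, ∀ q ≠ p, φ.symm (swap p q) (f' p) ≠ f' p) : Function.LeftInverse f' f := by
  intro a
  refine eq_of_forall_ne_eq_or_eq hα Function.injective_id fun b hb ↦ ?_
  have hne := hf a b hb
  have hswap : φ (swap a b) = swap (f a) (φ (swap a b) (f a)) :=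
    eq_swap_of_isSwap (hφ _ ⟨a, b, hb.symm, rfl⟩) hne.symm hne ((φ (swap a b)).injective.ne hne)
  have hmove := hf' (f a) _ hne
  rw [← hswap, φ.symm_apply_apply] at hmove
  exact (swap_apply_ne_self_iff.mp hmove).2

theorem exists_perm_map_swap (hα : 3 ≤ ENat.card α) {φ : MulAut (Perm α)}
    (hφ : ∀ s : Perm α, (φ s).IsSwap ↔ s.IsSwap) :
    ∃ g : Perm α, ∀ a b, a ≠ b → φ (swap a b) = swap (g a) (g b) := by
  have hφ' : ∀ s : Perm α, s.IsSwap → (φ.symm s).IsSwap := fun s hs ↦ by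
    rwa [← hφ, φ.apply_symm_apply]
  choose f hf using exists_forall_map_swap_apply_ne hα fun s ↦ (hφ s).mpr
  choose f' hf' using exists_forall_map_swap_apply_ne hα hφ'
  let g : Perm α :=
    ⟨f, f', leftInverse_of_map_swap_apply_ne hα (fun s ↦ (hφ s).mpr) hf hf',
      leftInverse_of_map_swap_apply_ne hα hφ' hf' hf⟩
  refine ⟨g, fun a b hab ↦ ?_⟩
  refine eq_swap_of_isSwap ((hφ _).mpr ⟨a, b, hab, rfl⟩) (g.injective.ne hab) (hf a b hab.symm) ?_
  rw [swap_comm]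
  exact hf b a hab

theorem eq_conj_of_map_swap (hα : 3 ≤ ENat.card α) {φ : MulAut (Perm α)} {g : Perm α}
    (h : ∀ a b, a ≠ b → φ (swap a b) = swap (g a) (g b)) : φ = MulAut.conj g := by
  ext1 x
  rw [MulAut.conj_apply, eq_mul_inv_iff_mul_eq]
  ext a
  refine eq_of_forall_ne_eq_or_eq hα (g * x).injective fun b hb ↦ ?_
  have hswap : swap (φ x (g a)) (φ x (g b)) = swap (g (x a)) (g (x b)) := by
    rw [swap_apply_apply, ← h a b hb.symm, ← h _ _ (x.injective.ne hb.symm), swap_apply_apply,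
      map_mul, map_mul, map_inv]
  have hmove : swap (φ x (g a)) (φ x (g b)) (φ x (g a)) ≠ φ x (g a) := by
    rw [swap_apply_left]
    exact (φ x).injective.ne (g.injective.ne hb)
  rw [hswap] at hmove
  exact (swap_apply_ne_self_iff.mp hmove).2

end SwapPreserving

theorem subsingleton_mulAut_of_card_le_two {G : Type*} [Group G] (hG : ENat.card G ≤ 2) :
    Subsingleton (MulAut G) := by
  refine subsingleton_of_forall_eq 1 fun φ ↦ MulEquiv.ext fun x ↦ ?_
  by_contra hx
  have hne : x ≠ 1 := by
    rintro rfl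
    exact hx (map_one φ)
  have hnodup : [1, x, φ x].Nodup := by
    have hφ : φ x ≠ 1 := (map_ne_one_iff φ φ.injective).mpr hne
    grind [MulAut.one_apply]
  have hle := (Set.encard_le_card (s := {y | y ∈ [1, x, φ x]})).trans hG
  rw [encard_setOf_mem_of_nodup hnodup] at hle
  simp only [List.length_cons, List.length_nil] at hle
  norm_num at hle

theorem card_perm_le_two {α : Type*} (hα : ENat.card α ≤ 2) : ENat.card (Perm α) ≤ 2 := by
  have : Finite α := ENat.card_lt_top.mp (hα.trans_lt (ENat.natCast_lt_top 2))
  have hle : Nat.card α ≤ 2 := by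
    rwa [ENat.card_eq_coe_natCard, ← Nat.cast_ofNat, Nat.cast_le] at hα
  rw [ENat.card_eq_coe_natCard, Nat.card_perm]
  exact_mod_cast Nat.factorial_le hle

theorem mulAut_conj_surjective_of_card_ne_six {α : Type*} (hα : ENat.card α ≠ 6) :
    Function.Surjective (MulAut.conj : Perm α →* MulAut (Perm α)) := by
  classical
  intro φ
  rcases le_or_gt (ENat.card α) 2 with h2 | h2
  · have := subsingleton_mulAut_of_card_le_two (card_perm_le_two h2)
    exact ⟨1, Subsingleton.elim _ _⟩
  · have h3 : 3 ≤ ENat.card α := Order.add_one_le_of_lt h2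
    obtain ⟨g, hg⟩ := exists_perm_map_swap h3 (isSwap_map_iff h3 hα φ)
    exact ⟨g, (eq_conj_of_map_swap h3 hg).symm⟩

theorem exists_equiv_apply_eq_iff_card_fiber_eq {ι κ X : Type*} [Finite ι] [Finite κ]
    {f : ι → X} {g : κ → X} :
    (∃ e : ι ≃ κ, ∀ i, g (e i) = f i) ↔
      ∀ ξ, Nat.card {i // f i = ξ} = Nat.card {j // g j = ξ} := by
  constructor
  · rintro ⟨e, he⟩ ξ
    exact Nat.card_congr (e.subtypeEquiv fun i ↦ by rw [he i])
  · intro h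
    have e (ξ : X) : {i // f i = ξ} ≃ {j // g j = ξ} := (Finite.card_eq.mp (h ξ)).some
    exact ⟨Equiv.ofFiberEquiv e, Equiv.ofFiberEquiv_map e⟩

section

variable {G : Type*} [Group G]

theorem conjClasses_map_mulAut_conj (g : G) (C : ConjClasses G) :
    C.map ((MulAut.conj g : G ≃* G) : G →* G) = C := by
  obtain ⟨a, rfl⟩ := ConjClasses.mk_surjective C
  exact ConjClasses.mk_eq_mk_iff_isConj.mpr (isConj_iff.mpr ⟨g, rfl⟩).symm

theorem monoidHom_apply_conj {M : Type*} [CommMonoid M] (χ : G →* M) (k x : G) :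
    χ (k * x * k⁻¹) = χ x :=
  (isConj_iff_eq.mp (χ.map_isConj (isConj_iff.mpr ⟨k, rfl⟩))).symm

namespace RSC

variable {r : ConjClasses G → ℕ} {u : ConjClasses G → G}
  {huA huB : ∀ C : ConjClasses G, ConjClasses.mk (u C) = C}
  {χ χ' : ∀ C : ConjClasses G, Fin (r C) → (Subgroup.centralizer ({u C} : Set G) →* ℂˣ)}

theorem Iso.of_equiv
    (h : ∀ C, r C ≠ 0 → ∃ e : Fin (r C) ≃ Fin (r C), ∀ i, χ' C (e i) = χ C i) :
    RSC.Iso ⟨r, u, huA, χ⟩ ⟨r, u, huB, χ'⟩ := by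
  refine ⟨MulAut.conj 1, fun C ↦ ⟨1, ?_⟩⟩
  rw [conjClasses_map_mulAut_conj]
  refine ⟨by simp, fun hC ↦ ?_⟩
  obtain ⟨e, he⟩ := h C hC
  refine ⟨e, fun i x hx hx' ↦ ?_⟩
  simp [he]

theorem Iso.exists_equiv (hG : Function.Surjective (MulAut.conj : G →* MulAut G))
    (h : RSC.Iso ⟨r, u, huA, χ⟩ ⟨r, u, huB, χ'⟩) (C : ConjClasses G) (hC : r C ≠ 0) :
    ∃ e : Fin (r C) ≃ Fin (r C), ∀ i, χ' C (e i) = χ C i := by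
  obtain ⟨φ, hφ⟩ := h
  obtain ⟨g, rfl⟩ := hG φ
  obtain ⟨k, hk, hχ⟩ := hφ C
  rw [conjClasses_map_mulAut_conj] at hk hχ
  obtain ⟨e, he⟩ := hχ hC
  have hgk : g * k ∈ Subgroup.centralizer ({u C} : Set G) := by
    rw [Subgroup.mem_centralizer_singleton_iff, ← mul_inv_eq_iff_eq_mul]
    simpa [mul_assoc] using hk
  refine ⟨e, fun i ↦ MonoidHom.ext fun x ↦ ?_⟩
  have hx : MulAut.conj g (k * x * k⁻¹) = g * k * x * (g * k)⁻¹ := by simp [mul_assoc]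
  have hmem : MulAut.conj g (k * x * k⁻¹) ∈ Subgroup.centralizer ({u C} : Set G) :=
    hx ▸ mul_mem (mul_mem hgk x.2) (inv_mem hgk)
  have hconj : (⟨MulAut.conj g (k * x * k⁻¹), hmem⟩ : Subgroup.centralizer ({u C} : Set G)) =
      ⟨g * k, hgk⟩ * x * ⟨g * k, hgk⟩⁻¹ := Subtype.ext hx
  rw [← monoidHom_apply_conj (χ' C (e i)) ⟨g * k, hgk⟩ x, ← hconj]
  exact he i x x.2 hmem

end RSC

theorem rsc_iso_iff_same_type_general (hG : Function.Surjective (MulAut.conj : G →* MulAut G))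
    (A B : RSC G) (hr : A.r = B.r) (hu : A.u = B.u) :
    RSC.Iso A B ↔
      ∀ C : ConjClasses G, A.r C ≠ 0 →
        ∀ ξ : Subgroup.centralizer ({A.u C} : Set G) →* ℂˣ,
          Nat.card {i : Fin (A.r C) // A.chi C i = ξ} =
            Nat.card {j : Fin (B.r C) //
              ∀ (x : G) (hx : x ∈ Subgroup.centralizer ({A.u C} : Set G))
                (hx' : x ∈ Subgroup.centralizer ({B.u C} : Set G)),
                B.chi C j ⟨x, hx'⟩ = ξ ⟨x, hx⟩} := by
  obtain ⟨r, u, huA, χ⟩ := A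
  obtain ⟨_, _, huB, χ'⟩ := B
  dsimp only at hr hu
  subst hr hu
  have hext : ∀ C j ξ, (∀ (x : G) (hx hx' : x ∈ Subgroup.centralizer ({u C} : Set G)),
      χ' C j ⟨x, hx'⟩ = ξ ⟨x, hx⟩) ↔ χ' C j = ξ := fun C j ξ ↦
    ⟨fun h ↦ MonoidHom.ext fun x ↦ h x x.2 x.2, fun h _ _ _ ↦ h ▸ rfl⟩
  simp only [hext, ← exists_equiv_apply_eq_iff_card_fiber_eq]
  exact ⟨RSC.Iso.exists_equiv hG, RSC.Iso.of_equiv⟩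

end

/-- Let `G = S_n` with `n` a positive integer, `n ≠ 6`, let `r` be a ramification of
`G` and `u` a fixed choice of representatives of the conjugacy classes.  Then
`RSC(G, r, χ⃗, u)` and `RSC(G, r, χ⃗', u)` are isomorphic if and only if for every
`C ∈ K_r(G)` the multiset `{χ_C^{(i)}}` equals the multiset `{χ'_C^{(i)}}`, i.e. for
every character `ξ` of `Z_{u(C)}` the number of indices `i` with `χ_C^{(i)} = ξ`
equals the number of indices `i` with `χ'_C^{(i)} = ξ`. -/
theorem rsc_iso_iff_same_type (n : ℕ) (hn : 0 < n) (h6 : n ≠ 6)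
    (A B : RSC (Equiv.Perm (Fin n))) (hr : A.r = B.r) (hu : A.u = B.u) :
    RSC.Iso A B ↔
      ∀ C : ConjClasses (Equiv.Perm (Fin n)), A.r C ≠ 0 →
        ∀ ξ : Subgroup.centralizer ({A.u C} : Set (Equiv.Perm (Fin n))) →* ℂˣ,
          Nat.card {i : Fin (A.r C) // A.chi C i = ξ} =
            Nat.card {j : Fin (B.r C) //
              ∀ (x : Equiv.Perm (Fin n))
                (hx : x ∈ Subgroup.centralizer ({A.u C} : Set (Equiv.Perm (Fin n))))
                (hx' : x ∈ Subgroup.centralizer ({B.u C} : Set (Equiv.Perm (Fin n)))),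
                B.chi C j ⟨x, hx'⟩ = ξ ⟨x, hx⟩} :=
  rsc_iso_iff_same_type_general
    (mulAut_conj_surjective_of_card_ne_six (by simpa using mod_cast h6)) A B hr hu
end
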